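/- arXiv:1902.07018 — 3 statements merged into one kernel-verified Lean document; each statement's English description precedes it below -/
import Mathlib

section
/- If r and k are both even positive integers, then R_ℓ(K_{1,r}, k) = (r-1)k + 1 = R(K_{1,r}, k). -/
/-- The star `K_{1,r}` with centre `0` and `r` leaves. -/
def starGraph (r : ℕ) : SimpleGraph (Fin (r + 1)) :=
  SimpleGraph.fromRel (fun a _ => a = 0)

/-- A colouring `c` of the edges of the complete graph on `Fin n` contains a
monochromatic copy of the graph `G`. -/
def HasMonoCopy {α β : Type*} (G : SimpleGraph α) {n : ℕ} (c : Sym2 (Fin n) → β) : Prop :=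
  ∃ (f : α → Fin n) (x : β), Function.Injective f ∧
    ∀ a b, G.Adj a b → c s(f a, f b) = x

/-- The `k`-colour list Ramsey number of a graph `G`: the least `n` for which one can
assign a list of `k` colours to each edge of `K_n` so that every colouring of the edges
from these lists contains a monochromatic copy of `G`. -/
noncomputable def listRamsey {α : Type*} (G : SimpleGraph α) (k : ℕ) : ℕ :=
  sInf { n : ℕ | ∃ L : Sym2 (Fin n) → Finset ℕ,
    (∀ e : Sym2 (Fin n), ¬ e.IsDiag → (L e).card = k) ∧
    ∀ c : Sym2 (Fin n) → ℕ, (∀ e : Sym2 (Fin n), ¬ e.IsDiag → c e ∈ L e) →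
      HasMonoCopy G c }

/-- The ordinary `k`-colour Ramsey number of a graph `G`: the least `n` such that every
`k`-colouring of the edges of `K_n` contains a monochromatic copy of `G`. -/
noncomputable def ramsey {α : Type*} (G : SimpleGraph α) (k : ℕ) : ℕ :=
  sInf { n : ℕ | ∀ c : Sym2 (Fin n) → Fin k, HasMonoCopy G c }

/-- An ordering of the edges at each vertex of the complete graph on `{0, …, 2m - 1}`: the value
`edgeRank m v w` is the rank of the edge `vw` among the edges at `v`. The diagonal is ranked last.
Rows are permutations of `{0, …, 2m - 1}`, and they are determined by the symmetric sums
`edgeRank m v w + edgeRank m w v`; see `eq_edgeRank`. -/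
def edgeRank (m v w : ℕ) : ℕ :=
  if v = w then 2 * m - 1
  else if w = 2 * m - 1 then (if v < m then v else v - m)
  else if v = 2 * m - 1 then 2 * m - 2 - w
  else if v + w < 2 * m - 1 then
    if ((v + w) % 2 = 1 ↔ v < w) then (v + w + 1) / 2 else 2 * m - 1 - (v + w + 1) / 2
  else if ((v + w) % 2 = 1 ↔ v < w) then (v + w + 1 - 2 * m) / 2
    else 2 * m - 2 - (v + w + 1 - 2 * m) / 2

lemma edgeRank_self (m v : ℕ) : edgeRank m v v = 2 * m - 1 := if_pos rfl

/-- Case description of `edgeRank` off the diagonal, in a form suited to `omega`. -/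
lemma edgeRank_cases (m v w : ℕ) (h : v ≠ w) :
    w = 2 * m - 1 ∧ v < m ∧ edgeRank m v w = v ∨
    w = 2 * m - 1 ∧ m ≤ v ∧ edgeRank m v w = v - m ∨
    w ≠ 2 * m - 1 ∧ v = 2 * m - 1 ∧ edgeRank m v w = 2 * m - 2 - w ∨
    w ≠ 2 * m - 1 ∧ v ≠ 2 * m - 1 ∧ v + w < 2 * m - 1 ∧ ((v + w) % 2 = 1 ↔ v < w) ∧
      edgeRank m v w = (v + w + 1) / 2 ∨
    w ≠ 2 * m - 1 ∧ v ≠ 2 * m - 1 ∧ v + w < 2 * m - 1 ∧ ¬ ((v + w) % 2 = 1 ↔ v < w) ∧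
      edgeRank m v w = 2 * m - 1 - (v + w + 1) / 2 ∨
    w ≠ 2 * m - 1 ∧ v ≠ 2 * m - 1 ∧ 2 * m - 1 ≤ v + w ∧ ((v + w) % 2 = 1 ↔ v < w) ∧
      edgeRank m v w = (v + w + 1 - 2 * m) / 2 ∨
    w ≠ 2 * m - 1 ∧ v ≠ 2 * m - 1 ∧ 2 * m - 1 ≤ v + w ∧ ¬ ((v + w) % 2 = 1 ↔ v < w) ∧
      edgeRank m v w = 2 * m - 2 - (v + w + 1 - 2 * m) / 2 := by
  unfold edgeRank
  rw [if_neg h]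
  split_ifs with h₁ h₂ h₃ h₄ h₅ h₅
  · exact Or.inl ⟨h₁, h₂, rfl⟩
  · exact Or.inr (Or.inl ⟨h₁, not_lt.mp h₂, rfl⟩)
  · exact Or.inr (Or.inr (Or.inl ⟨h₁, h₃, rfl⟩))
  · exact Or.inr (Or.inr (Or.inr (Or.inl ⟨h₁, h₃, h₄, h₅, rfl⟩)))
  · exact Or.inr (Or.inr (Or.inr (Or.inr (Or.inl ⟨h₁, h₃, h₄, h₅, rfl⟩))))
  · exact Or.inr (Or.inr (Or.inr (Or.inr (Or.inr (Or.inl ⟨h₁, h₃, not_lt.mp h₄, h₅, rfl⟩)))))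
  · exact Or.inr (Or.inr (Or.inr (Or.inr (Or.inr (Or.inr ⟨h₁, h₃, not_lt.mp h₄, h₅, rfl⟩)))))

lemma edgeRank_lt {m v w : ℕ} (hv : v < 2 * m) (hw : w < 2 * m) (h : v ≠ w) :
    edgeRank m v w < 2 * m - 1 := by
  rcases edgeRank_cases m v w h with h | h | h | h | h | h | h <;> omega

lemma edgeRank_injOn {m v w w' : ℕ} (hv : v < 2 * m) (hw : w < 2 * m) (hw' : w' < 2 * m)
    (hvw : v ≠ w) (hvw' : v ≠ w') (h : edgeRank m v w = edgeRank m v w') : w = w' := by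
  rcases edgeRank_cases m v w hvw with h₁ | h₁ | h₁ | h₁ | h₁ | h₁ | h₁ <;>
  rcases edgeRank_cases m v w' hvw' with h₂ | h₂ | h₂ | h₂ | h₂ | h₂ | h₂ <;> omega

lemma edgeRank_add {m v w : ℕ} (hv : v < 2 * m - 1) (hw : w < 2 * m - 1) (hvw : v ≠ w) :
    edgeRank m v w + edgeRank m w v = if v + w < 2 * m - 1 then 2 * m - 1 else 2 * m - 2 := by
  rcases edgeRank_cases m v w hvw with h₁ | h₁ | h₁ | h₁ | h₁ | h₁ | h₁ <;>
  rcases edgeRank_cases m w v hvw.symm with h₂ | h₂ | h₂ | h₂ | h₂ | h₂ | h₂ <;>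
    split_ifs <;> omega

lemma edgeRank_add_last {m v : ℕ} (hv : v < 2 * m - 1) :
    edgeRank m v (2 * m - 1) + edgeRank m (2 * m - 1) v = if v < m then 2 * m - 2 else m - 2 := by
  rcases edgeRank_cases m v (2 * m - 1) hv.ne with h₁ | h₁ | h₁ | h₁ | h₁ | h₁ | h₁ <;>
  rcases edgeRank_cases m (2 * m - 1) v hv.ne' with h₂ | h₂ | h₂ | h₂ | h₂ | h₂ | h₂ <;>
    split_ifs <;> omega

/-- The vertex `w` whose edge has rank `k < m` at the vertex `v < 2m - 1`. -/
def rankPos (m v k : ℕ) : ℕ :=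
  if v = k ∨ v = m + k then 2 * m - 1
  else if v < k then 2 * k - 1 - v
  else if v ≤ 2 * k then 2 * k - v
  else if v < m + k then 2 * m - 1 + 2 * k - v
  else 2 * m + 2 * k - v

lemma rankPos_spec {m v k : ℕ} (hv : v < 2 * m - 1) (hk : k < m) :
    rankPos m v k < 2 * m ∧ rankPos m v k ≠ v ∧ edgeRank m v (rankPos m v k) = k := by
  have h : rankPos m v k < 2 * m ∧ rankPos m v k ≠ v := by
    unfold rankPos; split_ifs <;> omega
  refine ⟨h.1, h.2, ?_⟩
  rcases edgeRank_cases m v (rankPos m v k) h.2.symm with h | h | h | h | h | h | h <;>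
    unfold rankPos at h ⊢ <;> split_ifs at h ⊢ <;> omega

lemma rankPos_self {m v : ℕ} : rankPos m v v = 2 * m - 1 := by simp [rankPos]

lemma rankPos_add_left {m k : ℕ} : rankPos m (m + k) k = 2 * m - 1 := by simp [rankPos]

lemma rankPos_eq {m u w k : ℕ} (hk : k < m) (hu : u < 2 * m - 1) (hw : w < 2 * m - 1)
    (h : u < w ∧ u + w + 1 = 2 * k ∨ w < u ∧ u + w = 2 * k ∨
      u < w ∧ u + w + 1 = 2 * m + 2 * k ∨ w < u ∧ u + w = 2 * m + 2 * k) :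
    rankPos m u k = w := by
  unfold rankPos
  split_ifs <;> omega

section Unique

variable {m : ℕ} {A : ℕ → ℕ → ℕ}

set_option maxHeartbeats 2000000 in
/-- If the rows of `A` order the edges at each vertex, `A` has the same symmetric sums as
`edgeRank`, and `A` agrees with `edgeRank` at all positions lexicographically before
`(k, v)`, then the two agree at `(k, v)`. -/
lemma apply_rankPos_eq {k v : ℕ} (hk : k < m) (hv : v < 2 * m - 1)
    (hlt : ∀ v w, v < 2 * m → w < 2 * m → v ≠ w → A v w < 2 * m - 1)
    (hinj : ∀ v w w', v < 2 * m → w < 2 * m → w' < 2 * m → v ≠ w → v ≠ w' →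
      A v w = A v w' → w = w')
    (hsurj : ∀ v x, v < 2 * m → x < 2 * m - 1 → ∃ w < 2 * m, v ≠ w ∧ A v w = x)
    (hadd : ∀ v w, v < 2 * m → w < 2 * m → v ≠ w →
      A v w + A w v = edgeRank m v w + edgeRank m w v)
    (ih : ∀ k' v', v' < 2 * m - 1 → (k' < k ∨ k' = k ∧ v' < v) → A v' (rankPos m v' k') = k') :
    A v (rankPos m v k) = k := by
  obtain ⟨w, hw, hvw, hA⟩ := hsurj v k (by omega) (by omega)
  by_cases hp : w = rankPos m v k
  · rwa [← hp]
  exfalso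
  have hI : ∀ v w, v < 2 * m - 1 → w < 2 * m - 1 → v ≠ w → v + w < 2 * m - 1 →
      A v w + A w v = 2 * m - 1 := fun v w h₁ h₂ h h' => by
    rw [hadd v w (by omega) (by omega) h, edgeRank_add h₁ h₂ h, if_pos h']
  have hII : ∀ v w, v < 2 * m - 1 → w < 2 * m - 1 → v ≠ w → ¬ v + w < 2 * m - 1 →
      A v w + A w v = 2 * m - 2 := fun v w h₁ h₂ h h' => by
    rw [hadd v w (by omega) (by omega) h, edgeRank_add h₁ h₂ h, if_neg h']
  have hL : ∀ v, v < 2 * m - 1 →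
      A v (2 * m - 1) + A (2 * m - 1) v = if v < m then 2 * m - 2 else m - 2 := fun v h => by
    rw [hadd v _ (by omega) (by omega) (by omega), edgeRank_add_last h]
  have clash : ∀ u, u < 2 * m → u ≠ v → w ≠ u → A w u = A w v → False := fun u h₁ h₂ h₃ h =>
    h₂ (hinj w u v hw h₁ (by omega) h₃ hvw.symm h)
  have known : ∀ k' u t, u < 2 * m - 1 → t < 2 * m - 1 → (k' < k ∨ k' = k ∧ u < v) →
      (u < t ∧ u + t + 1 = 2 * k' ∨ t < u ∧ u + t = 2 * k' ∨
      u < t ∧ u + t + 1 = 2 * m + 2 * k' ∨ t < u ∧ u + t = 2 * m + 2 * k') → A u t = k' := by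
    intro k' u t hu ht h h'
    rw [← rankPos_eq (m := m) (by omega) hu ht h']
    exact ih k' u hu h
  rcases eq_or_ne w (2 * m - 1) with rfl | hwN
  · have hLv := hL v hv
    split_ifs at hLv with hvm
    · rcases lt_trichotomy v k with h | h | h
      · have := ih v v hv (Or.inl h)
        rw [rankPos_self] at this
        omega
      · subst h
        exact hp rankPos_self.symm
      · have := ih k k (by omega) (Or.inr ⟨rfl, h⟩)
        rw [rankPos_self] at this
        have hLk := hL k (by omega)
        rw [if_pos hk] at hLk
        exact clash k (by omega) (by omega) (by omega) (by omega)
    · rcases lt_trichotomy v (m + k) with h | h | h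
      · have := ih (v - m) v hv (Or.inl (by omega))
        have h' : rankPos m v (v - m) = 2 * m - 1 := by
          conv_lhs => rw [show v = m + (v - m) by omega, Nat.add_sub_cancel_left]
          exact rankPos_add_left
        rw [h'] at this
        omega
      · subst h
        exact hp rankPos_add_left.symm
      · have := ih k (m + k) (by omega) (Or.inr ⟨rfl, h⟩)
        rw [rankPos_add_left] at this
        have hLk := hL (m + k) (by omega)
        rw [if_neg (by omega)] at hLk
        exact clash (m + k) (by omega) (by omega) (by omega) (by omega)
  have hw' : w < 2 * m - 1 := by omega
  have hnp : ¬ (v < w ∧ v + w + 1 = 2 * k ∨ w < v ∧ v + w = 2 * k ∨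
      v < w ∧ v + w + 1 = 2 * m + 2 * k ∨ w < v ∧ v + w = 2 * m + 2 * k) :=
    fun h => hp (rankPos_eq hk hv hw' h).symm
  by_cases hs : v + w < 2 * m - 1
  · have hvwI := hI v w hv hw' hvw hs
    rcases lt_or_ge (v + w + 1) (2 * k) with h | h
    · by_cases hc : (v < w ↔ (v + w) % 2 = 1)
      · have := known ((v + w + 1) / 2) v w hv hw' (by omega) (by omega)
        omega
      · have := known ((v + w + 1) / 2) w v hw' hv (by omega) (by omega)
        omega
    by_cases h' : v + w + 1 = 2 * k
    · have := known k w v hw' hv (by omega) (by omega)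
      omega
    have hbound := hlt w v hw (by omega) hvw.symm
    have hk0 : 0 < k := by omega
    rcases lt_or_ge w k with h₁ | h₁
    · have := known k (2 * k - w) w (by omega) hw' (by omega) (by omega)
      have := hI (2 * k - w) w (by omega) hw' (by omega) (by omega)
      exact clash (2 * k - w) (by omega) (by omega) (by omega) (by omega)
    rcases lt_or_ge w (2 * k) with h₂ | h₂
    · have := known k (2 * k - 1 - w) w (by omega) hw' (by omega) (by omega)
      have := hI (2 * k - 1 - w) w (by omega) hw' (by omega) (by omega)
      exact clash (2 * k - 1 - w) (by omega) (by omega) (by omega) (by omega)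
    rcases lt_or_ge (2 * w) (2 * m + 2 * k - 2) with h₃ | h₃
    · have := known (k - 1) (2 * m + 2 * k - 2 - w) w (by omega) hw' (by omega) (by omega)
      have := hII (2 * m + 2 * k - 2 - w) w (by omega) hw' (by omega) (by omega)
      exact clash (2 * m + 2 * k - 2 - w) (by omega) (by omega) (by omega) (by omega)
    · have := known (k - 1) (2 * m + 2 * k - 3 - w) w (by omega) hw' (by omega) (by omega)
      have := hII (2 * m + 2 * k - 3 - w) w (by omega) hw' (by omega) (by omega)
      exact clash (2 * m + 2 * k - 3 - w) (by omega) (by omega) (by omega) (by omega)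
  · have hvwII := hII v w hv hw' hvw hs
    rcases lt_or_ge (v + w + 1) (2 * m + 2 * k) with h | h
    · by_cases hc : (v < w ↔ (v + w) % 2 = 1)
      · have := known ((v + w + 1 - 2 * m) / 2) v w hv hw' (by omega) (by omega)
        omega
      · have := known ((v + w + 1 - 2 * m) / 2) w v hw' hv (by omega) (by omega)
        omega
    by_cases h' : v + w + 1 = 2 * m + 2 * k
    · have := known k w v hw' hv (by omega) (by omega)
      omega
    rcases lt_or_ge (2 * w) (2 * m + 2 * k) with h₁ | h₁
    · have := known k (2 * m + 2 * k - w) w (by omega) hw' (by omega) (by omega)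
      have := hII (2 * m + 2 * k - w) w (by omega) hw' (by omega) (by omega)
      exact clash (2 * m + 2 * k - w) (by omega) (by omega) (by omega) (by omega)
    · have := known k (2 * m + 2 * k - 1 - w) w (by omega) hw' (by omega) (by omega)
      have := hII (2 * m + 2 * k - 1 - w) w (by omega) hw' (by omega) (by omega)
      exact clash (2 * m + 2 * k - 1 - w) (by omega) (by omega) (by omega) (by omega)

/-- A system of orderings of the edges at each vertex with the same symmetric sums as `edgeRank`
is equal to `edgeRank`. -/
lemma eq_edgeRank
    (hlt : ∀ v w, v < 2 * m → w < 2 * m → v ≠ w → A v w < 2 * m - 1)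
    (hinj : ∀ v w w', v < 2 * m → w < 2 * m → w' < 2 * m → v ≠ w → v ≠ w' →
      A v w = A v w' → w = w')
    (hsurj : ∀ v x, v < 2 * m → x < 2 * m - 1 → ∃ w < 2 * m, v ≠ w ∧ A v w = x)
    (hadd : ∀ v w, v < 2 * m → w < 2 * m → v ≠ w →
      A v w + A w v = edgeRank m v w + edgeRank m w v)
    {v w : ℕ} (hv : v < 2 * m) (hw : w < 2 * m) (hvw : v ≠ w) : A v w = edgeRank m v w := by
  have key : ∀ k, k < m → ∀ v, v < 2 * m - 1 → A v (rankPos m v k) = k := by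
    intro k
    induction k using Nat.strong_induction_on with
    | _ k ihk =>
      intro hk v
      induction v using Nat.strong_induction_on with
      | _ v ihv =>
        intro hv
        refine apply_rankPos_eq hk hv hlt hinj hsurj hadd fun k' v' hv' h => ?_
        rcases h with h | ⟨rfl, h⟩
        · exact ihk k' h (h.trans hk) v' hv'
        · exact ihv v' h hv'
  have small : ∀ v w, v < 2 * m - 1 → w < 2 * m → v ≠ w → edgeRank m v w < m →
      A v w = edgeRank m v w := by
    intro v w hv hw hvw hlt
    obtain ⟨h₁, h₂, h₃⟩ := rankPos_spec hv hlt
    have h := key _ hlt v hv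
    rwa [edgeRank_injOn (by omega) h₁ hw h₂.symm hvw h₃] at h
  have hvw' := hadd v w hv hw hvw
  have : v < 2 * m - 1 ∧ edgeRank m v w < m ∨ w < 2 * m - 1 ∧ edgeRank m w v < m := by
    rcases edgeRank_cases m v w hvw with h | h | h | h | h | h | h <;>
      rcases edgeRank_cases m w v hvw.symm with h' | h' | h' | h' | h' | h' | h' <;> omega
  rcases this with h | h
  · exact small v w h.1 hw hvw h.2
  · have := small w v h.1 hv hvw.symm h.2
    omega

end Unique

open Finset

lemma edgeRank_add_lt {m v w : ℕ} (hv : v < 2 * m) (hw : w < 2 * m) (h : v ≠ w) :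
    edgeRank m v w + edgeRank m w v < 2 * m := by
  rcases eq_or_ne v (2 * m - 1) with rfl | hv'
  · rw [add_comm, edgeRank_add_last (by omega)]
    split_ifs <;> omega
  rcases eq_or_ne w (2 * m - 1) with rfl | hw'
  · rw [edgeRank_add_last (by omega)]
    split_ifs <;> omega
  rw [edgeRank_add (by omega) (by omega) h]
  split_ifs <;> omega

/-- The permutation of `Fin (2 * m)` listing the ranks in row `v`. -/
noncomputable def edgeRankPerm (m : ℕ) (v : Fin (2 * m)) : Equiv.Perm (Fin (2 * m)) :=
  Equiv.ofBijective
    (fun w => ⟨edgeRank m v w, by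
      rcases eq_or_ne (v : ℕ) w with h | h
      · rw [h, edgeRank_self]; omega
      · exact (edgeRank_lt v.2 w.2 h).trans (by omega)⟩)
    (Finite.injective_iff_bijective.1 fun w w' h => by
      have h' : edgeRank m v w = edgeRank m v w' := congrArg Fin.val h
      refine Fin.ext ?_
      rcases eq_or_ne (v : ℕ) w with hw | hw <;> rcases eq_or_ne (v : ℕ) w' with hw' | hw'
      · exact hw.symm.trans hw'
      · have := edgeRank_lt v.2 w'.2 hw'
        rw [← hw, edgeRank_self] at h'
        omega
      · have := edgeRank_lt v.2 w.2 hw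
        rw [← hw', edgeRank_self] at h'
        omega
      · exact edgeRank_injOn v.2 w.2 w'.2 hw hw' h')

lemma edgeRankPerm_apply {m : ℕ} (v w : Fin (2 * m)) :
    (edgeRankPerm m v w : ℕ) = edgeRank m v w := rfl

/-- The exponent of the monomial `∏ v, ∏ w, X s(v, w) ^ π v w`. -/
noncomputable def edgeExponent {n : ℕ} (π : Fin n → Equiv.Perm (Fin n)) : Sym2 (Fin n) →₀ ℕ :=
  ∑ v, ∑ w, Finsupp.single s(v, w) (π v w : ℕ)

lemma edgeExponent_diag {n : ℕ} (π : Fin n → Equiv.Perm (Fin n)) (v : Fin n) :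
    edgeExponent π s(v, v) = π v v := by
  simp only [edgeExponent, Finsupp.finsetSum_apply, Finsupp.single_apply]
  rw [Finset.sum_eq_single v, Finset.sum_eq_single v]
  · simp
  · intro w _ hw
    rw [if_neg (by simp [hw])]
  · simp
  · intro u _ hu
    exact Finset.sum_eq_zero fun w _ => if_neg (by simp [hu])
  · simp

lemma edgeExponent_of_ne {n : ℕ} (π : Fin n → Equiv.Perm (Fin n)) {v w : Fin n} (h : v ≠ w) :
    edgeExponent π s(v, w) = π v w + π w v := by
  simp only [edgeExponent, Finsupp.finsetSum_apply, Finsupp.single_apply]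
  rw [← Finset.sum_subset (Finset.subset_univ {v, w}), Finset.sum_pair h,
    Finset.sum_eq_single w, Finset.sum_eq_single v]
  · simp [Sym2.eq_swap]
  · intro u _ hu
    rw [if_neg]
    rw [Sym2.eq_iff]; tauto
  · simp
  · intro u _ hu
    rw [if_neg]
    rw [Sym2.eq_iff]; tauto
  · simp
  · intro u _ hu
    refine Finset.sum_eq_zero fun x _ => if_neg ?_
    rw [Sym2.eq_iff]
    simp at hu
    tauto

lemma edgeExponent_degree {n : ℕ} (π : Fin n → Equiv.Perm (Fin n)) :
    (edgeExponent π).degree = n * ∑ i : Fin n, (i : ℕ) := by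
  simp only [edgeExponent, map_sum, Finsupp.degree_single]
  rw [Finset.sum_congr rfl fun v _ => Equiv.sum_comp (π v) (fun i : Fin n => (i : ℕ))]
  simp

lemma edgeExponent_unique {m : ℕ} (π : Fin (2 * m) → Equiv.Perm (Fin (2 * m)))
    (h : edgeExponent π = edgeExponent (edgeRankPerm m)) : π = edgeRankPerm m := by
  have hdiag (v : Fin (2 * m)) : (π v v : ℕ) = 2 * m - 1 := by
    rw [← edgeExponent_diag, h, edgeExponent_diag, edgeRankPerm_apply, edgeRank_self]
  let A : ℕ → ℕ → ℕ := fun v w =>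
    if h : v < 2 * m ∧ w < 2 * m then (π ⟨v, h.1⟩ ⟨w, h.2⟩ : ℕ) else 0
  have hA (v w : Fin (2 * m)) : A v w = π v w := dif_pos ⟨v.2, w.2⟩
  have hoff (v w : Fin (2 * m)) (hvw : v ≠ w) : (π v w : ℕ) = edgeRankPerm m v w := by
    rw [← hA, edgeRankPerm_apply]
    refine eq_edgeRank ?_ ?_ ?_ ?_ v.2 w.2 (Fin.val_ne_of_ne hvw)
    · intro v w hv hw hne
      lift v to Fin (2 * m) using hv
      lift w to Fin (2 * m) using hw
      rw [hA]
      have h₁ : (π v w : ℕ) ≠ π v v := fun h =>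
        hne (congrArg Fin.val ((π v).injective (Fin.ext h))).symm
      have := hdiag v
      omega
    · intro v w w' hv hw hw' _ _ h
      lift v to Fin (2 * m) using hv
      lift w to Fin (2 * m) using hw
      lift w' to Fin (2 * m) using hw'
      rw [hA, hA] at h
      exact congrArg Fin.val ((π v).injective (Fin.ext h))
    · intro v x hv hx
      lift v to Fin (2 * m) using hv
      have hx' : (π v ((π v).symm ⟨x, by omega⟩) : ℕ) = x := by simp
      refine ⟨(π v).symm ⟨x, by omega⟩, Fin.is_lt _, fun heq => ?_, by rw [hA, hx']⟩
      rw [← Fin.ext heq, hdiag] at hx'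
      omega
    · intro v w hv hw hne
      lift v to Fin (2 * m) using hv
      lift w to Fin (2 * m) using hw
      have hne' : v ≠ w := fun h => hne (congrArg Fin.val h)
      rw [hA, hA, ← edgeExponent_of_ne π hne', h, edgeExponent_of_ne _ hne']
      rfl
  ext v w
  rcases eq_or_ne v w with rfl | hvw
  · rw [hdiag, edgeRankPerm_apply, edgeRank_self]
  · exact hoff v w hvw

open MvPolynomial in
/-- The product over all vertices of the Vandermonde determinants in the edges at that vertex.
It is nonzero at a colouring only if the colouring is proper. -/
noncomputable def edgePolynomial (n : ℕ) : MvPolynomial (Sym2 (Fin n)) ℤ :=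
  ∏ v : Fin n, (Matrix.vandermonde fun w => (X s(v, w) : MvPolynomial (Sym2 (Fin n)) ℤ)).det

open MvPolynomial in
lemma edgePolynomial_eq_sum (n : ℕ) :
    edgePolynomial n = ∑ π : Fin n → Equiv.Perm (Fin n),
      monomial (edgeExponent π) (∏ v, ((Equiv.Perm.sign (π v) : ℤ))) := by
  have h (v : Fin n) : (Matrix.vandermonde
      fun w => (X s(v, w) : MvPolynomial (Sym2 (Fin n)) ℤ)).det = ∑ σ : Equiv.Perm (Fin n),
        monomial (∑ w, Finsupp.single s(v, w) (σ w : ℕ)) (Equiv.Perm.sign σ : ℤ) := by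
    rw [← Matrix.det_transpose, Matrix.det_apply']
    refine Finset.sum_congr rfl fun σ _ => ?_
    simp only [Matrix.transpose_apply, Matrix.vandermonde_apply, X_pow_eq_monomial]
    rw [← monomial_sum_one, ← map_intCast (C : ℤ →+* MvPolynomial (Sym2 (Fin n)) ℤ),
      C_mul_monomial]
    simp
  rw [edgePolynomial, Finset.prod_congr rfl fun v _ => h v, Fintype.prod_sum]
  refine Finset.sum_congr rfl fun π _ => ?_
  rw [edgeExponent, monomial_sum_index, map_prod, ← Finset.prod_mul_distrib]
  exact Finset.prod_congr rfl fun v _ => by rw [C_mul_monomial, mul_one]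

open MvPolynomial in
/-- **Häggkvist–Janssen**: the complete graph on `2 * m` vertices has a proper edge colouring from
any lists of size `2 * m`. -/
lemma exists_list_edge_colouring_complete (m : ℕ) (L : Sym2 (Fin (2 * m)) → Finset ℕ)
    (hL : ∀ e, ¬ e.IsDiag → #(L e) = 2 * m) :
    ∃ c : Sym2 (Fin (2 * m)) → ℕ, (∀ e, ¬ e.IsDiag → c e ∈ L e) ∧
      ∀ u v w, c s(u, v) = c s(u, w) → v = w := by
  have hcoeff : (edgePolynomial (2 * m)).coeff (edgeExponent (edgeRankPerm m)) ≠ 0 := by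
    rw [edgePolynomial_eq_sum, coeff_sum, Finset.sum_eq_single (edgeRankPerm m)]
    · rw [coeff_monomial, if_pos rfl]
      exact Finset.prod_ne_zero_iff.2 fun v _ => (Equiv.Perm.sign _).ne_zero
    · intro π _ hπ
      rw [coeff_monomial, if_neg fun h => hπ (edgeExponent_unique π h)]
    · simp
  have hdeg : (edgePolynomial (2 * m)).totalDegree = (edgeExponent (edgeRankPerm m)).degree := by
    refine le_antisymm ?_ ?_
    · rw [edgePolynomial_eq_sum]
      refine totalDegree_finsetSum_le fun π _ => (totalDegree_monomial_le _ _).trans ?_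
      change (edgeExponent π).degree ≤ _
      rw [edgeExponent_degree, edgeExponent_degree]
    · exact le_totalDegree (mem_support_iff.2 hcoeff)
  classical
  let S : Sym2 (Fin (2 * m)) → Finset ℕ := fun e => if e.IsDiag then range (2 * m) else L e
  obtain ⟨s, hs, heval⟩ := combinatorial_nullstellensatz_exists_eval_nonzero _ _ hcoeff hdeg
    (fun e => (S e).map Nat.castEmbedding) (by
      intro e
      induction e with | _ v w
      rw [card_map]
      rcases eq_or_ne v w with rfl | hvw
      · rw [edgeExponent_diag]
        simp [S]
      · rw [edgeExponent_of_ne _ hvw]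
        simp only [S, Sym2.mk_isDiag_iff, hvw, if_false]
        rw [hL _ (by simpa using hvw)]
        exact edgeRank_add_lt v.2 w.2 (Fin.val_ne_of_ne hvw))
  simp only [mem_map, Nat.castEmbedding_apply] at hs
  choose c hc hcs using hs
  refine ⟨c, fun e he => by simpa [S, he] using hc e, fun u v w h => ?_⟩
  rw [edgePolynomial, map_prod, Finset.prod_ne_zero_iff] at heval
  have hdet : (Matrix.vandermonde fun w => s s(u, w)).det ≠ 0 := by
    have := heval u (mem_univ _)
    rw [Matrix.det_vandermonde] at this ⊢
    simpa using this
  refine Matrix.det_vandermonde_ne_zero_iff.1 hdet ?_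
  simp only [← hcs, h]

/-- **Stable matchings**: every set `F` of edges of a bipartite graph contains a matching `S`
dominating all other edges of `F`, with respect to preferences `p` on rows and `q` on columns. -/
lemma exists_kernel {I J : Type*} [DecidableEq I] [DecidableEq J] (p q : I × J → ℕ)
    (hp : ∀ i j j', p (i, j) = p (i, j') → j = j') (hq : ∀ i i' j, q (i, j) = q (i', j) → i = i')
    (F : Finset (I × J)) :
    ∃ S ⊆ F, (∀ e ∈ S, ∀ f ∈ S, e.1 = f.1 ∨ e.2 = f.2 → e = f) ∧
      ∀ e ∈ F, e ∉ S → ∃ f ∈ S, e.1 = f.1 ∧ p e < p f ∨ e.2 = f.2 ∧ q e < q f := by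
  induction F using Finset.strongInduction with
  | _ F ih =>
    by_cases h : ∃ e ∈ F, ∃ e' ∈ F, (∀ f ∈ F, f.1 = e'.1 → p f ≤ p e') ∧
        e.2 = e'.2 ∧ q e < q e'
    · obtain ⟨e, he, e', he', hmax, hcol, hlt⟩ := h
      obtain ⟨S, hS, hmatch, hdom⟩ := ih (F.erase e) (erase_ssubset he)
      refine ⟨S, hS.trans (erase_subset _ _), hmatch, fun f hf hfS => ?_⟩
      rcases eq_or_ne f e with rfl | hfe
      · by_cases h' : e' ∈ S
        · exact ⟨e', h', Or.inr ⟨hcol, hlt⟩⟩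
        · have hne : e' ≠ f := by rintro rfl; exact lt_irrefl _ hlt
          obtain ⟨g, hg, h | h⟩ := hdom e' (mem_erase.2 ⟨hne, he'⟩) h'
          · exact absurd (hmax g (erase_subset _ _ (hS hg)) h.1.symm) (not_le.2 h.2)
          · exact ⟨g, hg, Or.inr ⟨hcol.trans h.1, hlt.trans h.2⟩⟩
      · exact hdom f (mem_erase.2 ⟨hfe, hf⟩) hfS
    · push Not at h
      refine ⟨{e ∈ F | ∀ f ∈ F, f.1 = e.1 → p f ≤ p e}, filter_subset _ _, ?_, ?_⟩
      · rintro ⟨i, j⟩ he ⟨i', j'⟩ hf hef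
        rw [mem_filter] at he hf
        rcases hef with hef | hef
        · obtain rfl : i = i' := hef
          rw [hp i j j' (le_antisymm (hf.2 _ he.1 rfl) (he.2 _ hf.1 rfl))]
        · obtain rfl : j = j' := hef
          rw [hq i i' j (le_antisymm (h _ hf.1 _ he.1 he.2 rfl) (h _ he.1 _ hf.1 hf.2 rfl))]
      · intro e he heS
        obtain ⟨f, hf, hmax⟩ := exists_max_image {f ∈ F | f.1 = e.1} p ⟨e, by simp [he]⟩
        simp only [mem_filter] at hf hmax
        refine ⟨f, mem_filter.2 ⟨hf.1, fun g hg hgf => hmax g ⟨hg, hgf.trans hf.2⟩⟩, Or.inl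
          ⟨hf.2.symm, lt_of_le_of_ne (hmax e ⟨he, rfl⟩) fun heq => ?_⟩⟩
        have hef : e = f := Prod.ext hf.2.symm (hp e.1 e.2 f.2 (heq.trans (by
          rw [← hf.2])))
        exact heS (mem_filter.2 ⟨he, fun g hg hge => hef ▸ hmax g ⟨hg, hge⟩⟩)

/-- If each list is larger than the number of edges dominating the given edge, then there is a
proper edge colouring from the lists. -/
lemma exists_list_edge_colouring_of_dominating_lt {I J : Type*} [DecidableEq I] [DecidableEq J]
    (p q : I × J → ℕ) (hp : ∀ i j j', p (i, j) = p (i, j') → j = j')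
    (hq : ∀ i i' j, q (i, j) = q (i', j) → i = i') (F : Finset (I × J)) (L : I × J → Finset ℕ)
    (hL : ∀ e ∈ F, #{f ∈ F | e.1 = f.1 ∧ p e < p f ∨ e.2 = f.2 ∧ q e < q f} < #(L e)) :
    ∃ c : I × J → ℕ, (∀ e ∈ F, c e ∈ L e) ∧
      ∀ e ∈ F, ∀ f ∈ F, e.1 = f.1 ∨ e.2 = f.2 → c e = c f → e = f := by
  induction F using Finset.strongInduction generalizing L with
  | _ F ih =>
    rcases F.eq_empty_or_nonempty with rfl | ⟨e₀, he₀⟩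
    · exact ⟨fun _ => 0, by simp, by simp⟩
    obtain ⟨x, hx⟩ := card_pos.1 ((Nat.zero_le _).trans_lt (hL e₀ he₀))
    obtain ⟨S, hS, hmatch, hdom⟩ := exists_kernel p q hp hq {f ∈ F | x ∈ L f}
    have hSF : S ⊆ F := hS.trans (filter_subset _ _)
    have hne : S.Nonempty := by
      by_cases h : e₀ ∈ S
      · exact ⟨_, h⟩
      · obtain ⟨f, hf, -⟩ := hdom e₀ (by simp [he₀, hx]) h
        exact ⟨f, hf⟩
    obtain ⟨c, hc, hproper⟩ := ih (F \ S) (sdiff_ssubset hSF hne) (fun e => (L e).erase x) (by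
      intro e he
      rw [mem_sdiff] at he
      by_cases hxe : x ∈ L e
      · rw [card_erase_of_mem hxe]
        obtain ⟨f, hf, hef⟩ := hdom e (by simp [he.1, hxe]) he.2
        refine Nat.lt_sub_of_add_lt (lt_of_le_of_lt ?_ (hL e he.1))
        refine Nat.succ_le_of_lt (card_lt_card ?_)
        rw [ssubset_iff_of_subset (filter_subset_filter _ sdiff_subset)]
        exact ⟨f, mem_filter.2 ⟨hSF hf, hef⟩, by simp [hf]⟩
      · rw [erase_eq_of_notMem hxe]
        exact (card_le_card (filter_subset_filter _ sdiff_subset)).trans_lt (hL e he.1))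
    refine ⟨fun e => if e ∈ S then x else c e, fun e he => ?_, fun e he f hf hef => ?_⟩
    · by_cases h : e ∈ S
      · simpa [h] using (mem_filter.1 (hS h)).2
      · simpa [h] using mem_of_mem_erase (hc e (mem_sdiff.2 ⟨he, h⟩))
    · by_cases h : e ∈ S <;> by_cases hfS : f ∈ S <;> simp only [h, hfS, if_true, if_false]
      · exact fun _ => hmatch e h f hfS hef
      · exact fun h₁ => absurd h₁.symm (ne_of_mem_erase (hc f (mem_sdiff.2 ⟨hf, hfS⟩)))
      · exact fun h₁ => absurd h₁ (ne_of_mem_erase (hc e (mem_sdiff.2 ⟨he, h⟩)))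
      · exact hproper e (mem_sdiff.2 ⟨he, h⟩) f (mem_sdiff.2 ⟨hf, hfS⟩) hef

/-- **Galvin's theorem** for `K_{k,k}`. -/
lemma exists_list_edge_colouring_bipartite (k : ℕ) (L : Fin k × Fin k → Finset ℕ)
    (hL : ∀ e, #(L e) = k) :
    ∃ c : Fin k × Fin k → ℕ, (∀ e, c e ∈ L e) ∧
      ∀ e f, e.1 = f.1 ∨ e.2 = f.2 → c e = c f → e = f := by
  have hmod : ∀ a b c : ℕ, b < k → c < k → (a + b) % k = (a + c) % k → b = c :=
    fun a b c hb hc h => (Nat.ModEq.add_left_cancel' a h).eq_of_lt_of_lt hb hc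
  let p : Fin k × Fin k → ℕ := fun e => (e.1 + e.2) % k
  have hpk (e) : p e < k := Nat.mod_lt _ e.1.pos
  obtain ⟨c, hc, hproper⟩ := exists_list_edge_colouring_of_dominating_lt p (fun e => k - 1 - p e)
    (fun i j j' h => Fin.ext (hmod i j j' j.2 j'.2 h))
    (fun i i' j h => Fin.ext (hmod j i i' i.2 i'.2 (by
      have h₁ := hpk (i, j)
      have h₂ := hpk (i', j)
      have h₃ : p (i, j) = p (i', j) := by omega
      simpa only [p, add_comm] using h₃))) univ L (by
      intro e _
      rw [hL]
      have hk := hpk e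
      have h : ∀ f ∈ ({f ∈ univ | e.1 = f.1 ∧ p e < p f ∨ e.2 = f.2 ∧ k - 1 - p e < k - 1 - p f} :
          Finset (Fin k × Fin k)), p f ∈ (range k).erase (p e) := by
        intro f hf
        have := hpk f
        simp only [mem_filter, mem_univ, true_and] at hf
        simp only [mem_erase, mem_range]
        omega
      refine (card_le_card_of_injOn p h ?_).trans_lt ?_
      · rintro ⟨i, j⟩ hf ⟨i', j'⟩ hf' heq
        have h₁ := hpk (i, j)
        have h₂ := hpk (i', j')
        simp only [coe_filter, mem_univ, true_and, Set.mem_ofPred_eq] at hf hf'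
        rcases hf with hf | hf <;> rcases hf' with hf' | hf'
        · obtain rfl : i = i' := hf.1.symm.trans hf'.1
          rw [Fin.ext (hmod i j j' j.2 j'.2 heq)]
        · omega
        · omega
        · obtain rfl : j = j' := hf.1.symm.trans hf'.1
          have := hmod j i i' i.2 i'.2 (by simpa only [p, add_comm] using heq)
          rw [Fin.ext this]
      · rw [card_erase_of_mem (mem_range.2 hk), card_range]
        omega)
  exact ⟨c, fun e => hc e (mem_univ _), fun e f => hproper e (mem_univ _) f (mem_univ _)⟩

/-- For `k` even, the edges of the complete graph on `ℕ` can be coloured from lists of size `k`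
so that the edges from any vertex to any block `{a * k, …, a * k + k - 1}` get distinct colours. -/
lemma exists_block_colouring {k : ℕ} (hk : 0 < k) (hek : Even k) (L : Sym2 ℕ → Finset ℕ)
    (hL : ∀ e, ¬ e.IsDiag → #(L e) = k) :
    ∃ c : Sym2 ℕ → ℕ, (∀ e, ¬ e.IsDiag → c e ∈ L e) ∧
      ∀ u v w, v / k = w / k → c s(u, v) = c s(u, w) → v = w := by
  have hdiag (a : ℕ) : ∃ d : Sym2 (Fin k) → ℕ,
      (∀ i j : Fin k, i ≠ j → d s(i, j) ∈ L s(a * k + i, a * k + j)) ∧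
      ∀ i j j', d s(i, j) = d s(i, j') → j = j' := by
    obtain ⟨m, rfl⟩ := even_iff_two_dvd.1 hek
    have hinj : Function.Injective fun i : Fin (2 * m) => a * (2 * m) + (i : ℕ) :=
      fun i j h => Fin.ext (Nat.add_left_cancel h)
    obtain ⟨d, hd, hd'⟩ := exists_list_edge_colouring_complete m
      (fun e => L (e.map fun i : Fin (2 * m) => a * (2 * m) + (i : ℕ)))
      (fun e he => hL _ fun h => he ((Sym2.isDiag_map hinj).1 h))
    exact ⟨d, fun i j hij => hd s(i, j) (by simpa using hij), hd'⟩
  have hoff (a b : ℕ) : ∃ g : Fin k × Fin k → ℕ,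
      (a ≠ b → ∀ i j : Fin k, g (i, j) ∈ L s(a * k + i, b * k + j)) ∧
      ∀ e f, e.1 = f.1 ∨ e.2 = f.2 → g e = g f → e = f := by
    obtain ⟨g, hg, hg'⟩ := exists_list_edge_colouring_bipartite k
      (fun e => if a = b then range k else L s(a * k + e.1, b * k + e.2)) (by
        intro e
        split_ifs with h
        · exact card_range k
        · refine hL _ fun h' => h ?_
          rw [Sym2.mk_isDiag_iff] at h'
          have := congrArg (· / k) h'
          simpa [Nat.mul_add_div hk, mul_comm _ k, Nat.div_eq_of_lt] using this)
    exact ⟨g, fun hab i j => by simpa [hab] using hg (i, j), hg'⟩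
  choose d hd hd' using hdiag
  choose g hg hg' using hoff
  let pos (v : ℕ) : Fin k := ⟨v % k, Nat.mod_lt v hk⟩
  have hpos (v : ℕ) : v / k * k + pos v = v := Nat.div_add_mod' v k
  have hpos_inj (v w : ℕ) (h : v / k = w / k) (h' : pos v = pos w) : v = w := by
    rw [← hpos v, ← hpos w, h, h']
  let c : Sym2 ℕ → ℕ := Sym2.lift ⟨fun u v =>
    if u / k = v / k then d (u / k) s(pos u, pos v)
    else if u / k < v / k then g (u / k) (v / k) (pos u, pos v)
    else g (v / k) (u / k) (pos v, pos u), fun u v => by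
      rcases lt_trichotomy (u / k) (v / k) with h | h | h
      · simp only [h, h.ne, h.ne', h.not_gt, if_true, if_false]
      · simp only [h, if_true]
        rw [Sym2.eq_swap]
      · simp only [h, h.ne, h.ne', h.not_gt, if_true, if_false]⟩
  have hc (u v : ℕ) : c s(u, v) = if u / k = v / k then d (u / k) s(pos u, pos v)
    else if u / k < v / k then g (u / k) (v / k) (pos u, pos v)
    else g (v / k) (u / k) (pos v, pos u) := rfl
  refine ⟨c, fun e he => ?_, fun u v w hvw h => ?_⟩
  · induction e with | _ u v
    rw [Sym2.mk_isDiag_iff] at he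
    rw [hc]
    split_ifs with h₁ h₂
    · have := hd (u / k) (pos u) (pos v) fun h => he (hpos_inj u v h₁ h)
      rwa [hpos, show u / k * k + pos v = v by rw [h₁, hpos]] at this
    · have := hg _ _ h₁ (pos u) (pos v)
      rwa [hpos, hpos] at this
    · have := hg _ _ (Ne.symm h₁) (pos v) (pos u)
      rwa [hpos, hpos, Sym2.eq_swap] at this
  · refine hpos_inj v w hvw ?_
    rw [hc, hc, hvw] at h
    split_ifs at h
    · exact hd' _ _ _ _ h
    · exact congrArg Prod.snd (hg' _ _ (pos u, pos v) (pos u, pos w) (Or.inl rfl) h)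
    · exact congrArg Prod.fst (hg' _ _ (pos v, pos u) (pos w, pos u) (Or.inr rfl) h)

lemma starGraph_adj_zero_succ {r : ℕ} (i : Fin r) : (starGraph r).Adj 0 i.succ := by
  simp [starGraph, SimpleGraph.fromRel_adj, (Fin.succ_ne_zero i).symm]

lemma not_hasMonoCopy_star {β : Type*} {r k n : ℕ} (hk : 0 < k) (hr : 0 < r)
    (hn : n ≤ (r - 1) * k) (c : Sym2 (Fin n) → β)
    (hc : ∀ u v w : Fin n, u ≠ v → u ≠ w → (v : ℕ) / k = w / k → c s(u, v) = c s(u, w) → v = w) :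
    ¬ HasMonoCopy (starGraph r) c := by
  rintro ⟨f, x, hf, hx⟩
  have hblock (i : Fin r) : (f i.succ : ℕ) / k ∈ range (r - 1) :=
    mem_range.2 ((Nat.div_lt_iff_lt_mul hk).2 ((f i.succ).2.trans_le hn))
  obtain ⟨i, -, j, -, hij, h⟩ := exists_ne_map_eq_of_card_lt_of_maps_to
    (s := (univ : Finset (Fin r))) (t := range (r - 1)) (by simpa using hr)
    (fun i _ => hblock i)
  refine hij (Fin.succ_injective _ (hf (hc (f 0) _ _ ?_ ?_ h ?_)))
  · exact fun h => Fin.succ_ne_zero i (hf h).symm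
  · exact fun h => Fin.succ_ne_zero j (hf h).symm
  · rw [hx _ _ (starGraph_adj_zero_succ i), hx _ _ (starGraph_adj_zero_succ j)]

/-- List colourings of complete graphs on at most `(r - 1) * k` vertices may avoid monochromatic
stars `K_{1,r}`. -/
lemma exists_list_colouring_no_star {r k n : ℕ} (hr : 0 < r) (hk : 0 < k) (hek : Even k)
    (hn : n ≤ (r - 1) * k) (L : Sym2 (Fin n) → Finset ℕ) (hL : ∀ e, ¬ e.IsDiag → #(L e) = k) :
    ∃ c : Sym2 (Fin n) → ℕ, (∀ e, ¬ e.IsDiag → c e ∈ L e) ∧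
      ¬ HasMonoCopy (starGraph r) c := by
  classical
  have hval : Function.Injective (Sym2.map (Fin.val : Fin n → ℕ)) :=
    Sym2.map.injective Fin.val_injective
  obtain ⟨c, hc, hc'⟩ := exists_block_colouring hk hek
    (fun e => if h : ∃ e₀ : Sym2 (Fin n), e₀.map Fin.val = e then L h.choose else range k) (by
      intro e he
      split_ifs with h
      · refine hL _ fun h' => he ?_
        rw [← h.choose_spec]
        exact h'.map
      · exact card_range k)
  refine ⟨fun e => c (e.map Fin.val), fun e he => ?_, ?_⟩
  · have h : ∃ e₀ : Sym2 (Fin n), e₀.map Fin.val = e.map Fin.val := ⟨e, rfl⟩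
    have := hc (e.map Fin.val) fun h' => he ((Sym2.isDiag_map Fin.val_injective).1 h')
    rwa [dif_pos h, hval h.choose_spec] at this
  · exact not_hasMonoCopy_star hk hr hn _ fun u v w _ _ hb heq => Fin.ext (hc' u v w hb heq)

/-- A vertex with `r` edges of the same colour is the centre of a monochromatic star. -/
lemma hasMonoCopy_star_of_card {β : Type*} [DecidableEq β] {r n : ℕ} (c : Sym2 (Fin n) → β)
    (v : Fin n) (x : β) (h : r ≤ #{w | w ≠ v ∧ c s(v, w) = x}) : HasMonoCopy (starGraph r) c := by
  obtain ⟨s, hs, hcard⟩ := exists_subset_card_eq h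
  let e := s.orderEmbOfFin hcard
  have he (i : Fin r) : e i ≠ v ∧ c s(v, e i) = x := by
    simpa using hs (s.orderEmbOfFin_mem hcard i)
  refine ⟨Fin.cons v e, x, ?_, ?_⟩
  · rw [Fin.cons_injective_iff]
    exact ⟨fun ⟨i, hi⟩ => (he i).1 hi, e.injective⟩
  · intro a b hab
    simp only [starGraph, SimpleGraph.fromRel_adj] at hab
    rcases hab with ⟨hne, rfl | rfl⟩
    · obtain ⟨i, rfl⟩ := Fin.exists_succ_eq.2 hne.symm
      simpa using (he i).2
    · obtain ⟨i, rfl⟩ := Fin.exists_succ_eq.2 hne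
      rw [Sym2.eq_swap]
      simpa using (he i).2

/-- Every `k`-colouring of the complete graph on `(r - 1) * k + 1` vertices has a monochromatic star
`K_{1,r}`: otherwise each colour class would be regular of odd degree on an odd number of
vertices. -/
lemma hasMonoCopy_star {r k : ℕ} (hr : 0 < r) (hk : 0 < k) (her : Even r) (hek : Even k)
    (c : Sym2 (Fin ((r - 1) * k + 1)) → ℕ) (hc : ∀ e, ¬ e.IsDiag → c e ∈ range k) :
    HasMonoCopy (starGraph r) c := by
  by_contra hno
  have hle (v) (x : ℕ) : #{w | w ≠ v ∧ c s(v, w) = x} ≤ r - 1 := by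
    by_contra h
    exact hno (hasMonoCopy_star_of_card c v x (by omega))
  have hsum (v) : ∑ x ∈ range k, #{w | w ≠ v ∧ c s(v, w) = x} = ∑ x ∈ range k, (r - 1) := by
    have := card_eq_sum_card_fiberwise (s := univ.erase v) (t := range k)
      (f := fun w => c s(v, w)) (fun w hw => hc _ (by simpa [eq_comm] using hw))
    rw [card_erase_of_mem (mem_univ _), card_univ, Fintype.card_fin, Nat.add_sub_cancel] at this
    rw [sum_const, card_range, smul_eq_mul, mul_comm k]
    refine Eq.trans (sum_congr rfl fun x _ => congrArg card ?_) this.symm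
    ext w
    simp
  have heq (v) : #{w | w ≠ v ∧ c s(v, w) = 0} = r - 1 :=
    (sum_eq_sum_iff_of_le fun x _ => hle v x).1 (hsum v) 0 (mem_range.2 hk)
  let G : SimpleGraph (Fin ((r - 1) * k + 1)) :=
    { Adj := fun v w => w ≠ v ∧ c s(v, w) = 0
      symm := ⟨fun v w h => ⟨h.1.symm, by rw [Sym2.eq_swap]; exact h.2⟩⟩
      loopless := ⟨fun v h => h.1 rfl⟩ }
  classical
  have hdeg (v) : G.degree v = r - 1 := by
    rw [← SimpleGraph.card_neighborFinset_eq_degree]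
    refine Eq.trans (congrArg card ?_) (heq v)
    ext w
    simp [G]
  have htwice := G.sum_degrees_eq_twice_card_edges
  simp only [hdeg, sum_const, card_univ, Fintype.card_fin, smul_eq_mul] at htwice
  have hodd : Odd (((r - 1) * k + 1) * (r - 1)) :=
    (Even.add_one (hek.mul_left _)).mul (Nat.Even.sub_odd hr her odd_one)
  rw [htwice] at hodd
  exact Nat.not_odd_iff_even.2 (even_two_mul _) hodd

theorem list_ramsey_star_even (r k : ℕ) (hr : 0 < r) (hk : 0 < k)
    (her : Even r) (hek : Even k) :
    listRamsey (starGraph r) k = (r - 1) * k + 1 ∧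
    ramsey (starGraph r) k = (r - 1) * k + 1 := by
  constructor
  · refine IsLeast.csInf_eq ⟨⟨fun _ => range k, fun _ _ => card_range k, fun c hc =>
      hasMonoCopy_star hr hk her hek c hc⟩, ?_⟩
    rintro n ⟨L, hL, hmono⟩
    by_contra! hn
    obtain ⟨c, hc, hno⟩ := exists_list_colouring_no_star hr hk hek (Nat.le_of_lt_succ hn) L hL
    exact hno (hmono c hc)
  · refine IsLeast.csInf_eq ⟨fun c => ?_, ?_⟩
    · obtain ⟨f, x, hf, hx⟩ := hasMonoCopy_star hr hk her hek (fun e => (c e : ℕ))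
        fun e _ => mem_range.2 (c e).2
      have h := hx _ _ (starGraph_adj_zero_succ ⟨0, hr⟩)
      exact ⟨f, c s(f 0, f (Fin.succ ⟨0, hr⟩)), hf, fun a b hab =>
        Fin.ext ((hx a b hab).trans h.symm)⟩
    · intro n hmono
      by_contra! hn
      obtain ⟨c, hc, hno⟩ := exists_list_colouring_no_star hr hk hek (Nat.le_of_lt_succ hn)
        (fun _ => range k) fun _ _ => card_range k
      obtain ⟨f, x, hf, hx⟩ := hmono fun e => ⟨c e % k, Nat.mod_lt _ hk⟩
      refine hno ⟨f, x, hf, fun a b hab => ?_⟩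
      have hlt := mem_range.1 (hc s(f a, f b) (by simpa using hf.ne hab.ne))
      rw [← hx a b hab]
      exact (Nat.mod_eq_of_lt hlt).symm
end

section
/- Let r and k be positive integers with 2(k+1) ≤ log r. Then 2r ≤ R_ℓ(rK_2, k) ≤ 2r + 42·r^{k/(k+1)}. -/
/-- The matching `rK₂` consisting of `r` pairwise disjoint edges `{2i, 2i+1}`. -/
def matchingGraph (r : ℕ) : SimpleGraph (Fin (2 * r)) :=
  SimpleGraph.fromRel (fun a b => (b : ℕ) = (a : ℕ) + 1 ∧ (a : ℕ) % 2 = 0)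

open Finset

/-- The graph `G` contains `j` pairwise disjoint edges. -/
def HasMatching {V : Type*} (G : SimpleGraph V) (j : ℕ) : Prop :=
  ∃ a b : Fin j → V, Function.Injective (Sum.elim a b) ∧ ∀ i, G.Adj (a i) (b i)

/-- A matching extends by any edge outside it. -/
theorem HasMatching.of_adj_unmatched {V : Type*} {G : SimpleGraph V} {j : ℕ} {a b : Fin j → V}
    (hinj : Function.Injective (Sum.elim a b)) (hadj : ∀ i, G.Adj (a i) (b i)) {p q : V}
    (hp : p ∉ Set.range (Sum.elim a b)) (hq : q ∉ Set.range (Sum.elim a b)) (hpq : G.Adj p q) :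
    HasMatching G (j + 1) := by
  rw [Sum.elim_injective] at hinj
  obtain ⟨ha, hb, hab⟩ := hinj
  simp only [Set.Sum.elim_range, Set.mem_union, Set.mem_range, not_or, not_exists] at hp hq
  refine ⟨Fin.cons p a, Fin.cons q b, ?_, ?_⟩
  · rw [Sum.elim_injective]
    refine ⟨Fin.cons_injective_iff.2 ⟨by simpa using hp.1, ha⟩,
      Fin.cons_injective_iff.2 ⟨by simpa using hq.2, hb⟩, fun s t => ?_⟩
    refine Fin.cases ?_ (fun s => ?_) s <;> refine Fin.cases ?_ (fun t => ?_) t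
    · simpa using hpq.ne
    · simpa using fun h => hp.2 t h.symm
    · simpa using hq.1 s
    · simpa using hab s t
  · intro i
    refine Fin.cases ?_ (fun i => ?_) i
    · simpa using hpq
    · simpa using hadj i

/-- A matching grows along an augmenting path of length three. -/
theorem HasMatching.of_augmenting {V : Type*} {G : SimpleGraph V} {j : ℕ} {a b : Fin j → V}
    (hinj : Function.Injective (Sum.elim a b)) (hadj : ∀ i, G.Adj (a i) (b i)) {p q : V}
    (hp : p ∉ Set.range (Sum.elim a b)) (hq : q ∉ Set.range (Sum.elim a b)) (hpq : p ≠ q)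
    (i : Fin j) (hap : G.Adj (a i) p) (hbq : G.Adj (b i) q) :
    HasMatching G (j + 1) := by
  have hinj' := hinj
  rw [Sum.elim_injective] at hinj
  obtain ⟨ha, hb, hab⟩ := hinj
  simp only [Set.Sum.elim_range, Set.mem_union, Set.mem_range, not_or, not_exists] at hp hq
  refine HasMatching.of_adj_unmatched (a := a) (b := Function.update b i p) (p := b i) (q := q)
    ?_ ?_ ?_ ?_ hbq
  · rw [Sum.elim_injective]
    refine ⟨ha, ?_, ?_⟩
    · intro s t hst
      rw [Function.update_apply, Function.update_apply] at hst
      split_ifs at hst with hs ht ht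
      · rw [hs, ht]
      · exact absurd hst.symm (hp.2 t)
      · exact absurd hst (hp.2 s)
      · exact hb hst
    · intro s t
      rw [Function.update_apply]
      split_ifs with ht
      · exact hp.1 s
      · exact hab s t
  · intro s
    by_cases hs : s = i
    · subst hs; simpa using hap
    · simpa [hs] using hadj s
  · simp only [Set.Sum.elim_range, Set.mem_union, Set.mem_range, not_or, not_exists]
    refine ⟨fun s => hab s i, fun s hs => ?_⟩
    by_cases hsi : s = i
    · subst hsi; simp at hs; exact hp.2 s hs.symm
    · simp [hsi] at hs; exact hsi (hb hs)
  · simp only [Set.Sum.elim_range, Set.mem_union, Set.mem_range, not_or, not_exists]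
    refine ⟨hq.1, fun s hs => ?_⟩
    by_cases hsi : s = i
    · subst hsi; simp at hs; exact hpq hs
    · simp [hsi] at hs; exact hq.2 s hs

/-- A graph on `2 (r + p)` vertices without `r` disjoint edges has two disjoint vertex sets, of
sizes at least `p + 1` and `r + p`, with no edge between them; they are given as the fibres of a
`Fin 3`-valued function. -/
theorem exists_separated_of_not_hasMatching {V : Type*} [Fintype V] {r p : ℕ}
    (G : SimpleGraph V) (hV : Fintype.card V = 2 * (r + p)) (hG : ¬ HasMatching G r) :
    ∃ g : V → Fin 3, p + 1 ≤ #{v | g v = 0} ∧ r + p ≤ #{v | g v = 1} ∧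
      ∀ u v, g u = 0 → g v = 1 → ¬ G.Adj u v := by
  classical
  obtain ⟨j, hjr, ⟨a, b, hinj, hadj⟩, hj⟩ :
      ∃ j < r, HasMatching G j ∧ ¬ HasMatching G (j + 1) := by
    by_contra! H
    have : ∀ j ≤ r, HasMatching G j := by
      intro j
      induction j with
      | zero => exact fun _ => ⟨Fin.elim0, Fin.elim0, fun x => by
          rcases x with x | x <;> exact x.elim0, fun i => i.elim0⟩
      | succ j ih => exact fun h => H j (by omega) (ih (by omega))
    exact hG (this r le_rfl)
  set M : Finset V := univ.image (Sum.elim a b) with hM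
  have hMmem : ∀ v, v ∈ Mᶜ ↔ v ∉ Set.range (Sum.elim a b) := by
    intro v; simp [hM]
  have hMcard : #M = 2 * j := by
    rw [hM, card_image_of_injective _ hinj]; simp; omega
  have hUcard : #Mᶜ = 2 * (r + p - j) := by
    rw [card_compl, hV, hMcard]; omega
  obtain ⟨U₁, hU₁, hU₁card⟩ := exists_subset_card_eq (s := Mᶜ) (n := r + p - j) (by omega)
  set U₂ := Mᶜ \ U₁ with hU₂
  have hU₂card : #U₂ = r + p - j := by
    rw [hU₂, card_sdiff_of_subset hU₁]; omega
  have hdisj : ∀ u ∈ U₁, u ∉ U₂ := by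
    intro u hu; simp [hU₂, hu]
  have hU₂sub : U₂ ⊆ Mᶜ := sdiff_subset
  have hind : ∀ u ∈ Mᶜ, ∀ v ∈ Mᶜ, ¬ G.Adj u v := fun u hu v hv huv =>
    hj (HasMatching.of_adj_unmatched hinj hadj ((hMmem u).1 hu) ((hMmem v).1 hv) huv)
  have haug : ∀ i, ∀ u ∈ Mᶜ, ∀ v ∈ Mᶜ, G.Adj (a i) u → G.Adj (b i) v → u = v := by
    intro i u hu v hv hau hbv
    by_contra huv
    exact hj (HasMatching.of_augmenting hinj hadj ((hMmem u).1 hu) ((hMmem v).1 hv) huv i hau hbv)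
  let B : Finset V → Finset V := fun A => {v | v ∉ A ∧ ∀ u ∈ A, ¬ G.Adj v u}
  have hfin : ∀ A : Finset V, #A = r + p - j → r + p ≤ #(B A) →
      ∃ g : V → Fin 3, p + 1 ≤ #{v | g v = 0} ∧ r + p ≤ #{v | g v = 1} ∧
      ∀ u v, g u = 0 → g v = 1 → ¬ G.Adj u v := by
    intro A hA hB
    refine ⟨fun v => if v ∈ A then 0 else if v ∈ B A then 1 else 2, ?_, ?_, ?_⟩
    · have : ({v | (if v ∈ A then (0 : Fin 3) else if v ∈ B A then 1 else 2) = 0} : Finset V)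
          = A := by
        ext v; by_cases h1 : v ∈ A <;> by_cases h2 : v ∈ B A <;> simp [h1, h2]
      rw [this, hA]; omega
    · refine hB.trans (card_le_card fun v hv => ?_)
      have : v ∉ A := by simp [B] at hv; exact hv.1
      simp [this, hv]
    · intro u v hu hv huv
      have huA : u ∈ A := by
        by_contra h1
        by_cases h2 : u ∈ B A <;> simp [h1, h2] at hu
      have hvB : v ∈ B A := by
        by_contra h2
        by_cases h1 : v ∈ A <;> simp [h1, h2] at hv
      simp [B] at hvB
      exact hvB.2 u huA huv.symm
  have hsum : 2 * (r + p) ≤ #(B U₁) + #(B U₂) := by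
    let w : V → ℕ := fun v => (if v ∈ B U₁ then 1 else 0) + (if v ∈ B U₂ then 1 else 0)
    have hw : #(B U₁) + #(B U₂) = ∑ v, w v := by
      simp [w, sum_add_distrib]
    have hU : #Mᶜ ≤ ∑ v ∈ Mᶜ, w v := by
      rw [card_eq_sum_ones]
      refine sum_le_sum fun v hv => ?_
      by_cases hv1 : v ∈ U₁
      · have : v ∈ B U₂ := by
          simp only [B, mem_filter, mem_univ, true_and]
          exact ⟨hdisj v hv1, fun u hu => hind v hv u (hU₂sub hu)⟩
        simp [w, this]
      · have : v ∈ B U₁ := by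
          simp only [B, mem_filter, mem_univ, true_and]
          exact ⟨hv1, fun u hu => hind v hv u (hU₁ hu)⟩
        simp [w, this]
    have hmatched : 2 * j ≤ ∑ v ∈ M, w v := by
      rw [hM, sum_image hinj.injOn, Fintype.sum_sum_type, ← sum_add_distrib]
      have : 2 * j = ∑ i : Fin j, 2 := by simp [mul_comm]
      rw [this]
      refine sum_le_sum fun i _ => ?_
      have hmem : ∀ v ∈ M, ∀ A ⊆ Mᶜ, (v ∉ B A ↔ ∃ u ∈ A, G.Adj v u) := by
        intro v hv A hA
        have : v ∉ A := fun h => by simpa [hv] using hA h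
        simp [B, this]
      have haM : a i ∈ M := mem_image.2 ⟨Sum.inl i, by simp⟩
      have hbM : b i ∈ M := mem_image.2 ⟨Sum.inr i, by simp⟩
      have ha1 := hmem _ haM _ hU₁
      have ha2 := hmem _ haM _ hU₂sub
      have hb1 := hmem _ hbM _ hU₁
      have hb2 := hmem _ hbM _ hU₂sub
      have h12 : a i ∈ B U₁ ∨ b i ∈ B U₂ := by
        by_contra! H
        obtain ⟨u, hu, hau⟩ := ha1.1 H.1
        obtain ⟨v, hv, hbv⟩ := hb2.1 H.2
        exact hdisj u hu (haug i u (hU₁ hu) v (hU₂sub hv) hau hbv ▸ hv)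
      have h21 : a i ∈ B U₂ ∨ b i ∈ B U₁ := by
        by_contra! H
        obtain ⟨u, hu, hau⟩ := ha2.1 H.1
        obtain ⟨v, hv, hbv⟩ := hb1.1 H.2
        exact hdisj v hv ((haug i u (hU₂sub hu) v (hU₁ hv) hau hbv).symm ▸ hu)
      simp only [Sum.elim_inl, Sum.elim_inr, w]
      rcases h12 with h1 | h1 <;> rcases h21 with h2 | h2 <;> simp only [h1, h2, if_true] <;> omega
    rw [hw, ← sum_add_sum_compl M]
    omega
  rcases le_or_gt (r + p) #(B U₁) with h1 | h1
  · exact hfin U₁ hU₁card h1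
  · exact hfin U₂ hU₂card (by omega)

/-- `r` disjoint edges of the same colour form a monochromatic copy of `matchingGraph r`. -/
theorem hasMonoCopy_matchingGraph {β : Type*} {n r : ℕ} {c : Sym2 (Fin n) → β} {x : β}
    {G : SimpleGraph (Fin n)} (hG : ∀ u v, G.Adj u v → c s(u, v) = x) (h : HasMatching G r) :
    HasMonoCopy (matchingGraph r) c := by
  obtain ⟨a, b, hinj, hadj⟩ := h
  rw [Sum.elim_injective] at hinj
  obtain ⟨ha, hb, hab⟩ := hinj
  let half : Fin (2 * r) → Fin r := fun i => ⟨(i : ℕ) / 2, by omega⟩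
  have hstep : ∀ s t : Fin (2 * r), (t : ℕ) = s + 1 → (s : ℕ) % 2 = 0 →
      c s(if (s : ℕ) % 2 = 0 then a (half s) else b (half s),
        if (t : ℕ) % 2 = 0 then a (half t) else b (half t)) = x := by
    intro s t hst hs
    have ht : ¬ (t : ℕ) % 2 = 0 := by omega
    have : half t = half s := by simp only [half, Fin.mk.injEq]; omega
    rw [if_pos hs, if_neg ht, this]
    exact hG _ _ (hadj _)
  refine ⟨fun i => if (i : ℕ) % 2 = 0 then a (half i) else b (half i), x, ?_, ?_⟩
  · intro s t hst
    dsimp only at hst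
    have key : half s = half t → (s : ℕ) % 2 = (t : ℕ) % 2 → s = t := by
      intro h1 h2
      simp only [half, Fin.mk.injEq] at h1
      exact Fin.ext (by omega)
    split_ifs at hst with h1 h2 h2
    · exact key (ha hst) (by omega)
    · exact absurd hst (hab _ _)
    · exact absurd hst.symm (hab _ _)
    · exact key (hb hst) (by omega)
  · intro s t hst
    rw [matchingGraph, SimpleGraph.fromRel_adj] at hst
    rcases hst.2 with h | h
    · exact hstep s t h.1 h.2
    · rw [Sym2.eq_swap]; exact hstep t s h.1 h.2

/-- Union bound for random choice functions: if each of fewer than `exp l` systems of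
target sets is hit an expected number of at least `l` times, some choice function hits them all. -/
theorem exists_choice_meeting {E T Φ : Type*} [Fintype E] [Fintype T] [Nonempty T]
    (good : Φ → E → Finset T) (S : Finset Φ) (l : ℝ)
    (hgood : ∀ F ∈ S, l ≤ ∑ e, (#(good F e) : ℝ) / Fintype.card T)
    (hS : (#S : ℝ) < Real.exp l) :
    ∃ L : E → T, ∀ F ∈ S, ∃ e, L e ∈ good F e := by
  classical
  by_contra! H
  have hT : (0 : ℝ) < Fintype.card T := by exact_mod_cast Fintype.card_pos
  have hcover : (univ : Finset (E → T)) ⊆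
      S.biUnion fun F => Fintype.piFinset fun e => (good F e)ᶜ := by
    intro L _
    obtain ⟨F, hF, hL⟩ := H L
    simp only [mem_biUnion, Fintype.mem_piFinset, mem_compl]
    exact ⟨F, hF, hL⟩
  have hbad : ∀ F ∈ S, (#(Fintype.piFinset fun e => (good F e)ᶜ) : ℝ) ≤
      (Fintype.card T : ℝ) ^ Fintype.card E * Real.exp (-l) := by
    intro F hF
    rw [Fintype.card_piFinset, Nat.cast_prod]
    calc ∏ e, (#(good F e)ᶜ : ℝ)
        ≤ ∏ e, ((Fintype.card T : ℝ) * Real.exp (-(#(good F e) / Fintype.card T))) := by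
          refine prod_le_prod (fun e _ => by positivity) fun e _ => ?_
          rw [card_compl, Nat.cast_sub (card_le_univ _)]
          have := Real.add_one_le_exp (-((#(good F e) : ℝ) / Fintype.card T))
          have h2 := mul_le_mul_of_nonneg_left this hT.le
          have h3 : (Fintype.card T : ℝ) * (-((#(good F e) : ℝ) / Fintype.card T) + 1)
              = Fintype.card T - #(good F e) := by field_simp; ring
          linarith
      _ = (Fintype.card T : ℝ) ^ Fintype.card E *
            Real.exp (-∑ e, (#(good F e) : ℝ) / Fintype.card T) := by
          rw [prod_mul_distrib, ← Real.exp_sum, sum_neg_distrib]; simp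
      _ ≤ _ := by
          gcongr
          exact hgood F hF
  have hcount : (Fintype.card T : ℝ) ^ Fintype.card E ≤
      #S * ((Fintype.card T : ℝ) ^ Fintype.card E * Real.exp (-l)) := by
    have h1 := (card_le_card hcover).trans card_biUnion_le
    rw [card_univ, Fintype.card_fun] at h1
    calc (Fintype.card T : ℝ) ^ Fintype.card E
        ≤ ∑ F ∈ S, (#(Fintype.piFinset fun e => (good F e)ᶜ) : ℝ) := by exact_mod_cast h1
      _ ≤ _ := by
          rw [← nsmul_eq_mul]
          exact sum_le_card_nsmul _ _ _ hbad
  have hpos : (0 : ℝ) < (Fintype.card T : ℝ) ^ Fintype.card E := by positivity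
  have hlt : #S * ((Fintype.card T : ℝ) ^ Fintype.card E * Real.exp (-l)) <
      Real.exp l * ((Fintype.card T : ℝ) ^ Fintype.card E * Real.exp (-l)) := by
    gcongr
  have heq : Real.exp l * ((Fintype.card T : ℝ) ^ Fintype.card E * Real.exp (-l)) =
      (Fintype.card T : ℝ) ^ Fintype.card E := by
    rw [mul_left_comm, ← Real.exp_add]; simp
  linarith

/-- A power mean bound for sums of binomial coefficients. -/
theorem card_mul_pow_le_sum_choose_div {E : Type*} [Fintype E] (d : E → ℕ) {N k : ℕ}
    (hk : 0 < k) (hkN : k ≤ N) {t : ℝ} (ht : 0 ≤ t)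
    (hd : Fintype.card E * t * N ≤ ∑ e, (d e : ℝ) - (k - 1) * Fintype.card E) :
    Fintype.card E * t ^ k ≤ ∑ e, ((d e).choose k : ℝ) / N.choose k := by
  have hN : (0 : ℝ) < N := by exact_mod_cast hk.trans_le hkN
  have hterm : ∀ e, (((d e + 1 - k : ℕ) : ℝ) / N) ^ k ≤ ((d e).choose k : ℝ) / N.choose k := by
    intro e
    have h1 : ((d e + 1 - k : ℕ) : ℝ) ^ k ≤ (k.factorial : ℝ) * (d e).choose k := by
      exact_mod_cast (Nat.pow_sub_le_descFactorial (d e) k).trans_eq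
        (Nat.descFactorial_eq_factorial_mul_choose _ _)
    have h2 : (k.factorial : ℝ) * N.choose k ≤ (N : ℝ) ^ k := by
      exact_mod_cast (Nat.descFactorial_eq_factorial_mul_choose N k).symm.trans_le
        (Nat.descFactorial_le_pow _ _)
    have h3 : (0 : ℝ) < k.factorial := by exact_mod_cast k.factorial_pos
    have h4 : (0 : ℝ) < N.choose k := by exact_mod_cast Nat.choose_pos hkN
    rw [div_pow]
    calc ((d e + 1 - k : ℕ) : ℝ) ^ k / (N : ℝ) ^ k
        ≤ ((k.factorial : ℝ) * (d e).choose k) / (k.factorial * N.choose k) := by gcongr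
      _ = _ := mul_div_mul_left _ _ h3.ne'
  refine le_trans ?_ (sum_le_sum fun e _ => hterm e)
  rcases isEmpty_or_nonempty E with hE | hE
  · simp
  have hcard : (0 : ℝ) < Fintype.card E := by exact_mod_cast Fintype.card_pos
  have hsum : Fintype.card E * t ≤ ∑ e, ((d e + 1 - k : ℕ) : ℝ) / N := by
    rw [← sum_div, le_div_iff₀ hN]
    refine hd.trans ?_
    have : ∑ e : E, ((d e : ℝ) - (k - 1)) ≤ ∑ e, ((d e + 1 - k : ℕ) : ℝ) := by
      refine sum_le_sum fun e _ => ?_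
      have : (d e : ℝ) + 1 ≤ ((d e + 1 - k : ℕ) : ℝ) + k := by
        exact_mod_cast (show d e + 1 ≤ (d e + 1 - k) + k by omega)
      linarith
    rw [sum_sub_distrib] at this
    simp only [sum_const, card_univ, nsmul_eq_mul] at this
    linarith
  obtain ⟨j, rfl⟩ := Nat.exists_eq_succ_of_ne_zero hk.ne'
  have hpm := pow_sum_div_card_le_sum_pow (s := univ)
    (f := fun e => ((d e + 1 - (j + 1) : ℕ) : ℝ) / N) (fun e _ => by positivity) j
  refine le_trans ?_ hpm
  rw [le_div_iff₀ (by positivity), card_univ]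
  calc (Fintype.card E : ℝ) * t ^ (j + 1) * (Fintype.card E : ℝ) ^ j
      = (Fintype.card E * t) ^ (j + 1) := by ring
    _ ≤ _ := by gcongr

/-- The edge `e` joins the fibre of `g` over `0` to the fibre over `1`. -/
def Crosses {V : Type*} (g : V → Fin 3) (e : Sym2 V) : Prop :=
  ∃ u v, g u = 0 ∧ g v = 1 ∧ e = s(u, v)

open Classical in
theorem card_mul_card_le_card_crosses {V : Type*} [Fintype V] (g : V → Fin 3) :
    #{v | g v = 0} * #{v | g v = 1} ≤ #{e : {e : Sym2 V // ¬ e.IsDiag} | Crosses g e} := by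
  rw [← card_product, ← card_map (Function.Embedding.subtype _)]
  refine card_le_card_of_injOn (fun q => s(q.1, q.2)) ?_ ?_
  · rintro ⟨u, v⟩ huv
    simp only [coe_product, coe_filter, mem_univ, true_and, Set.mem_prod, Set.mem_ofPred_eq] at huv
    simp only [coe_map, Function.Embedding.subtype_apply, coe_filter, mem_univ, true_and,
      Set.mem_image, Set.mem_ofPred_eq]
    refine ⟨⟨s(u, v), ?_⟩, ⟨u, v, huv.1, huv.2, rfl⟩, rfl⟩
    rw [Sym2.mk_isDiag_iff]
    rintro rfl
    simp [huv.1] at huv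
  · rintro ⟨u, v⟩ huv ⟨u', v'⟩ huv' h
    simp only [coe_product, coe_filter, mem_univ, true_and, Set.mem_prod, Set.mem_ofPred_eq]
      at huv huv'
    rcases Sym2.eq_iff.1 h with ⟨h1, h2⟩ | ⟨h1, h2⟩
      <;> dsimp only at h1 h2
    · rw [h1, h2]
    · exfalso
      have := huv.1
      rw [h1, huv'.2] at this
      simp at this

/-- Random lists meet every family of large separated pairs: some edge crosses all the pairs
belonging to its list. -/
theorem exists_lists_crossing {n N k a b : ℕ} (hk : 0 < k) (hkN : k ≤ N) {t : ℝ} (ht : 0 ≤ t)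
    (hab : n.choose 2 * t * N ≤ N * (a * b) - (k - 1) * n.choose 2)
    (hent : n * N * Real.log 3 < n.choose 2 * t ^ k) :
    ∃ L : {e : Sym2 (Fin n) // ¬ e.IsDiag} → Finset (Fin N), (∀ e, #(L e) = k) ∧
      ∀ F : Fin N → Fin n → Fin 3, (∀ i, a ≤ #{v | F i v = 0} ∧ b ≤ #{v | F i v = 1}) →
        ∃ e, ∀ i ∈ L e, Crosses (F i) e := by
  classical
  have hE : Fintype.card {e : Sym2 (Fin n) // ¬ e.IsDiag} = n.choose 2 := by
    rw [Sym2.card_subtype_not_diag, Fintype.card_fin]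
  let T := {s : Finset (Fin N) // #s = k}
  have hT : Fintype.card T = N.choose k := by
    simp [T]
  have : Nonempty T := Fintype.card_pos_iff.1 (hT ▸ Nat.choose_pos hkN)
  let D : (Fin N → Fin n → Fin 3) → {e : Sym2 (Fin n) // ¬ e.IsDiag} → Finset (Fin N) :=
    fun F e => {i | Crosses (F i) e}
  let good : (Fin N → Fin n → Fin 3) → {e : Sym2 (Fin n) // ¬ e.IsDiag} → Finset T :=
    fun F e => {s | s.1 ⊆ D F e}
  have hgoodcard : ∀ F e, #(good F e) = (#(D F e)).choose k := by
    intro F e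
    rw [← card_powersetCard, ← card_map (Function.Embedding.subtype _)]
    congr 1
    ext s
    simp [good, mem_powersetCard, and_comm]
  let S : Finset (Fin N → Fin n → Fin 3) :=
    {F | ∀ i, a ≤ #{v | F i v = 0} ∧ b ≤ #{v | F i v = 1}}
  have hrate : ∀ F ∈ S, n.choose 2 * t ^ k ≤ ∑ e, (#(good F e) : ℝ) / Fintype.card T := by
    intro F hF
    have hF' : ∀ i, a ≤ #{v | F i v = 0} ∧ b ≤ #{v | F i v = 1} := by simpa [S] using hF
    simp only [hgoodcard, hT]
    rw [← hE]
    refine card_mul_pow_le_sum_choose_div _ hk hkN ht ?_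
    rw [hE]
    refine hab.trans ?_
    have hdc : ∑ e, #(D F e) =
        ∑ i, #{e : {e : Sym2 (Fin n) // ¬ e.IsDiag} | Crosses (F i) e} := by
      simp only [D, card_filter]
      exact sum_comm
    have : N * (a * b) ≤ ∑ e, #(D F e) := by
      rw [hdc]
      calc N * (a * b) = ∑ i : Fin N, a * b := by simp
        _ ≤ ∑ i, #{e : {e : Sym2 (Fin n) // ¬ e.IsDiag} | Crosses (F i) e} := by
            refine sum_le_sum fun i _ => (Nat.mul_le_mul (hF' i).1 (hF' i).2).trans ?_
            exact (card_mul_card_le_card_crosses (F i)).trans_eq (by congr!)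
    have h2 : (N : ℝ) * (a * b) ≤ ∑ e, (#(D F e) : ℝ) := by exact_mod_cast this
    linarith
  have hcard : (#S : ℝ) < Real.exp (n.choose 2 * t ^ k) := by
    have h1 : (#S : ℝ) ≤ (3 : ℝ) ^ (n * N) := by
      have := card_le_univ S
      rw [Fintype.card_fun, Fintype.card_fun, Fintype.card_fin, Fintype.card_fin, Fintype.card_fin,
        ← pow_mul] at this
      exact_mod_cast this
    refine h1.trans_lt ?_
    rw [← Real.exp_log (show (0 : ℝ) < 3 ^ (n * N) by positivity), Real.exp_lt_exp, Real.log_pow]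
    push_cast
    exact hent
  obtain ⟨L, hL⟩ := exists_choice_meeting good S _ hrate hcard
  refine ⟨fun e => (L e).1, fun e => (L e).2, fun F hF => ?_⟩
  obtain ⟨e, he⟩ := hL F (by simpa [S] using hF)
  refine ⟨e, fun i hi => ?_⟩
  have h1 : (L e).1 ⊆ D F e := by simpa [good] using he
  simpa [D] using h1 hi

/-- Lists for which every colouring contains a monochromatic matching of size `r`. -/
theorem exists_lists_forcing_matching {r p N k : ℕ} (hk : 0 < k) (hkN : k ≤ N) {t : ℝ}
    (ht : 0 ≤ t)
    (hab : (2 * (r + p)).choose 2 * t * N ≤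
      N * ((p + 1 : ℕ) * (r + p : ℕ)) - (k - 1) * (2 * (r + p)).choose 2)
    (hent : (2 * (r + p) : ℕ) * N * Real.log 3 < (2 * (r + p)).choose 2 * t ^ k) :
    ∃ L : Sym2 (Fin (2 * (r + p))) → Finset ℕ, (∀ e, ¬ e.IsDiag → #(L e) = k) ∧
      ∀ c : Sym2 (Fin (2 * (r + p))) → ℕ, (∀ e, ¬ e.IsDiag → c e ∈ L e) →
        HasMonoCopy (matchingGraph r) c := by
  classical
  obtain ⟨L, hLcard, hL⟩ := exists_lists_crossing hk hkN ht hab hent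
  refine ⟨fun e => if h : e.IsDiag then ∅ else (L ⟨e, h⟩).map Fin.valEmbedding, ?_, ?_⟩
  · intro e he
    simp [he, hLcard]
  · intro c hc
    by_contra hmono
    let G : ℕ → SimpleGraph (Fin (2 * (r + p))) := fun i =>
      SimpleGraph.fromRel fun u v => c s(u, v) = i
    have hG : ∀ i u v, (G i).Adj u v ↔ u ≠ v ∧ c s(u, v) = i := by
      intro i u v
      simp only [G, SimpleGraph.fromRel_adj]
      rw [Sym2.eq_swap (a := v), or_self]
    choose F hF0 hF1 hFadj using fun i : Fin N =>
      exists_separated_of_not_hasMatching (r := r) (p := p) (G i) (by simp)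
        fun h => hmono (hasMonoCopy_matchingGraph (fun u v huv => ((hG i u v).1 huv).2) h)
    obtain ⟨⟨e, he⟩, hcross⟩ := hL F fun i => ⟨hF0 i, hF1 i⟩
    have hce := hc e he
    simp only [he, dite_false, mem_map, Fin.valEmbedding_apply] at hce
    obtain ⟨i, hi, hci⟩ := hce
    obtain ⟨u, v, hu, hv, huv⟩ := hcross i hi
    dsimp only at huv
    subst huv
    exact hFadj i u v hu hv ((hG i u v).2 ⟨fun h => he (Sym2.mk_isDiag_iff.2 h), hci.symm⟩)

/-- The numerical conditions of `exists_lists_forcing_matching` in terms of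
`x = r ^ (1 / (k + 1))`. -/
theorem exists_parameters {r k : ℕ} {x : ℝ} (hk : 0 < k) (hx : 7.3 ≤ x)
    (hxr : x ^ (k + 1) = r) :
    ∃ p N : ℕ, (p : ℝ) ≤ 21 * x ^ k ∧ k ≤ N ∧
      (2 * (r + p)).choose 2 * (1.7 / x) * N ≤
        N * ((p + 1 : ℕ) * (r + p : ℕ)) - (k - 1) * ((2 * (r + p)).choose 2 : ℝ) ∧
      (2 * (r + p) : ℕ) * N * Real.log 3 < (2 * (r + p)).choose 2 * (1.7 / x) ^ k := by
  have hx0 : 0 < x := by linarith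
  have hk1 : (1 : ℝ) ≤ k := by exact_mod_cast hk
  have hxk : 1 ≤ x ^ k := one_le_pow₀ (by linarith)
  have hp := Nat.floor_le (show 0 ≤ 21 * x ^ k by positivity)
  have hp' := Nat.lt_floor_add_one (21 * x ^ k)
  have hN := Nat.le_ceil (k * x)
  have hN' := Nat.ceil_lt_add_one (show 0 ≤ k * x by positivity)
  set p := ⌊21 * x ^ k⌋₊
  set N := ⌈k * x⌉₊
  have hr : (r : ℝ) = x * x ^ k := by rw [← hxr]; ring
  have hp1 : (1 : ℝ) ≤ p := by
    have : (1 : ℕ) ≤ p := Nat.le_floor (by push_cast; linarith)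
    exact_mod_cast this
  have hE : ((2 * (r + p)).choose 2 : ℝ) = (r + p) * (2 * r + 2 * p - 1) := by
    rw [Nat.cast_choose_two]; push_cast; ring
  have hN0 : (0 : ℝ) < N := lt_of_lt_of_le (by positivity) hN
  have hr0 : (0 : ℝ) < r := by rw [hr]; positivity
  refine ⟨p, N, hp, ?_, ?_, ?_⟩
  · have : (k : ℝ) ≤ N := by nlinarith
    exact_mod_cast this
  · rw [hE]
    push_cast
    have hq : 2.7 * (2 * r + 2 * p - 1) ≤ x * (p + 1) := by
      nlinarith
    have hkx : (k - 1 : ℝ) ≤ N / x := by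
      rw [le_div_iff₀ hx0]; nlinarith
    have h1 : (r + p : ℝ) * (2 * r + 2 * p - 1) * (1.7 / x) * N +
        (k - 1) * ((r + p) * (2 * r + 2 * p - 1)) ≤
        (r + p : ℝ) * (2 * r + 2 * p - 1) * (1.7 / x) * N +
        N / x * ((r + p) * (2 * r + 2 * p - 1)) := by
      have : (0 : ℝ) ≤ (r + p) * (2 * r + 2 * p - 1) := by
        apply mul_nonneg <;> linarith
      gcongr
    have h2 : (r + p : ℝ) * (2 * r + 2 * p - 1) * (1.7 / x) * N +
        N / x * ((r + p) * (2 * r + 2 * p - 1)) =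
        N * (r + p) / x * (2.7 * (2 * r + 2 * p - 1)) := by
      field_simp; ring
    have h3 : N * (r + p) / x * (2.7 * (2 * r + 2 * p - 1)) ≤
        N * (r + p) / x * (x * (p + 1) : ℝ) := by gcongr
    have h4 : N * (r + p) / x * (x * (p + 1) : ℝ) = N * ((p + 1) * (r + p)) := by
      field_simp
    linarith
  · rw [hE]
    push_cast
    have hlog : Real.log 3 ≤ 1.2 := by
      rw [Real.log_le_iff_le_exp (by norm_num)]
      have h1 : (3 : ℝ) ^ 5 ≤ Real.exp 1.2 ^ 5 := by
        have h2 : Real.exp 1.2 ^ 5 = Real.exp 1 ^ 6 := by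
          rw [← Real.exp_nat_mul, ← Real.exp_nat_mul]; norm_num
        rw [h2]
        calc (3 : ℝ) ^ 5 ≤ 2.7 ^ 6 := by norm_num
          _ ≤ _ := by gcongr; linarith [Real.exp_one_gt_d9]
      exact le_of_pow_le_pow_left₀ (by norm_num) (Real.exp_pos _).le h1
    have hpow : ∀ j : ℕ, 0 < j → 1.2 * ((j : ℝ) + 0.14) < 1.7 ^ j := by
      intro j hj
      induction j, hj using Nat.le_induction with
      | base => norm_num
      | succ j hj ih =>
        rcases eq_or_lt_of_le hj with rfl | hj
        · norm_num
        · have : (2 : ℝ) ≤ j := by exact_mod_cast hj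
          rw [pow_succ]; push_cast; linarith
    have hNx : (N : ℝ) ≤ x * (k + 0.14) := by nlinarith
    have h1 : N * Real.log 3 < x * 1.7 ^ k := by
      calc N * Real.log 3 ≤ x * (k + 0.14) * 1.2 := by gcongr
        _ < _ := by nlinarith [hpow k hk]
    have h2 : x * 1.7 ^ k * 2 ≤ (2 * r + 2 * p - 1) * (1.7 / x) ^ k := by
      rw [div_pow, ← mul_div_assoc, le_div_iff₀ (by positivity)]
      have : (0 : ℝ) < 1.7 ^ k := by positivity
      calc x * 1.7 ^ k * 2 * x ^ k = 2 * r * 1.7 ^ k := by rw [hr]; ring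
        _ ≤ _ := by gcongr; linarith
    have h3 : (0 : ℝ) < r + p := by linarith
    nlinarith

theorem list_ramsey_matching_few_colours (r k : ℕ) (hr : 0 < r) (hk : 0 < k)
    (h : 2 * ((k : ℝ) + 1) ≤ Real.log r) :
    2 * r ≤ listRamsey (matchingGraph r) k ∧
    (listRamsey (matchingGraph r) k : ℝ) ≤ 2 * r + 42 * (r : ℝ) ^ ((k : ℝ) / (k + 1)) := by
  have hr0 : (0 : ℝ) < r := by exact_mod_cast hr
  have hk0 : (0 : ℝ) < (k : ℝ) + 1 := by positivity
  set x : ℝ := (r : ℝ) ^ (1 / ((k : ℝ) + 1)) with hx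
  have hxk : x ^ k = (r : ℝ) ^ ((k : ℝ) / (k + 1)) := by
    rw [hx, ← Real.rpow_natCast, ← Real.rpow_mul hr0.le]
    congr 1; ring
  have hxr : x ^ (k + 1) = r := by
    rw [hx, ← Real.rpow_natCast, ← Real.rpow_mul hr0.le]
    push_cast
    rw [one_div_mul_cancel hk0.ne', Real.rpow_one]
  have hx7 : 7.3 ≤ x := by
    have h1 : Real.exp 2 ≤ x := by
      rw [hx, Real.rpow_def_of_pos hr0, Real.exp_le_exp, mul_one_div, le_div_iff₀ hk0]
      exact h
    have h2 : Real.exp 2 = Real.exp 1 * Real.exp 1 := by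
      rw [← Real.exp_add]; norm_num
    nlinarith [Real.exp_one_gt_d9]
  obtain ⟨p, N, hp, hkN, hab, hent⟩ := exists_parameters hk hx7 hxr
  have hmem := exists_lists_forcing_matching hk hkN (by positivity) hab hent
  constructor
  · refine le_csInf ⟨_, hmem⟩ ?_
    rintro n ⟨L, hL, hforce⟩
    have hne : ∀ e : Sym2 (Fin n), ∃ y, ¬ e.IsDiag → y ∈ L e := by
      intro e
      by_cases he : e.IsDiag
      · exact ⟨0, fun h => absurd he h⟩
      · obtain ⟨y, hy⟩ := card_pos.1 (hk.trans_eq (hL e he).symm)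
        exact ⟨y, fun _ => hy⟩
    choose c hc using hne
    obtain ⟨f, -, hf, -⟩ := hforce c hc
    simpa using Fintype.card_le_of_injective f hf
  · have hle : listRamsey (matchingGraph r) k ≤ 2 * (r + p) := Nat.sInf_le hmem
    have hle' : (listRamsey (matchingGraph r) k : ℝ) ≤ 2 * (r + p) := by exact_mod_cast hle
    rw [← hxk]
    linarith
end

section
/- For every fixed integer r ≥ 2, R_ℓ(rK_2, k) = Θ(k/log k) as k → ∞; that is, there exist real constants C_1, C_2 > 0 and an integer k_0 such that for all integers k ≥ k_0, C_1·k/log k ≤ R_ℓ(rK_2, k) ≤ C_2·k/log k. -/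
/-- An irreflexive relation either contains `r` disjoint pairs or is covered by `2r`
points. -/
lemma exists_matching_or_cover {V : Type*} [Nonempty V] (R : V → V → Prop)
    (hirr : ∀ u, ¬ R u u) (r : ℕ) :
    (∃ f : ℕ → V, (∀ i < 2 * r, ∀ j < 2 * r, f i = f j → i = j) ∧
      ∀ i < r, R (f (2 * i)) (f (2 * i + 1))) ∨
    ∃ g : ℕ → V, ∀ u v, R u v → ∃ i < 2 * r, g i = u ∨ g i = v := by
  induction r with
  | zero => exact Or.inl ⟨fun _ => Classical.arbitrary V, by simp, by simp⟩
  | succ r ih =>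
    rcases ih with ⟨f, hinj, hR⟩ | ⟨g, hg⟩
    · by_cases hcov : ∀ u v, R u v → ∃ i < 2 * r, f i = u ∨ f i = v
      · refine Or.inr ⟨f, fun u v h => ?_⟩
        obtain ⟨i, hi, h⟩ := hcov u v h
        exact ⟨i, by omega, h⟩
      · push Not at hcov
        obtain ⟨u, v, huv, hout⟩ := hcov
        have hne : u ≠ v := by rintro rfl; exact hirr u huv
        refine Or.inl ⟨fun i => if i < 2 * r then f i else if i = 2 * r then u else v, ?_, ?_⟩
        · intro i hi j hj h
          have h1 := hout i
          have h2 := hout j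
          have h3 := hinj i
          grind
        · intro i hi
          rcases Nat.lt_succ_iff_lt_or_eq.mp hi with hlt | rfl
          · have h1 : 2 * i < 2 * r := by omega
            have h2 : 2 * i + 1 < 2 * r := by omega
            simpa [h1, h2] using hR i hlt
          · simpa using huv
    · refine Or.inr ⟨g, fun u v h => ?_⟩
      obtain ⟨i, hi, h⟩ := hg u v h
      exact ⟨i, by omega, h⟩

lemma choose_two_mul_le_three_pow_mul (k a : ℕ) (ha : 2 * a ≤ k) :
    (2 * k).choose k ≤ 3 ^ a * (2 * k - a).choose k := by
  induction a with
  | zero => simp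
  | succ a ih =>
    refine (ih (by omega)).trans ?_
    obtain ⟨m, hm⟩ : ∃ m, 2 * k - a = m + 1 := ⟨2 * k - a - 1, by omega⟩
    have hm' : 2 * k - (a + 1) = m := by omega
    rw [hm, hm', pow_succ, mul_assoc]
    refine Nat.mul_le_mul_left _ ?_
    have h := Nat.choose_mul_succ_eq m k
    have h3 : m + 1 ≤ 3 * (m + 1 - k) := by omega
    refine Nat.le_of_mul_le_mul_right ?_ (Nat.succ_pos m)
    calc (m + 1).choose k * (m + 1) ≤ (m + 1).choose k * (3 * (m + 1 - k)) :=
          Nat.mul_le_mul_left _ h3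
      _ = 3 * m.choose k * (m + 1) := by rw [mul_assoc 3, h]; ring

/-- Among the `k`-subsets of a `2k`-set, at most a `1 - 3⁻ᵃ` proportion meets a given set with at
most `a` elements. -/
lemma card_powersetCard_filter_hit_le (k a : ℕ) (ha : 2 * a ≤ k) (A : Finset (Fin (2 * k)))
    (hA : A.card ≤ a) :
    (((Finset.univ.powersetCard k).filter fun B => ∃ x ∈ B, x ∈ A).card : ℝ) ≤
      (2 * k).choose k * (1 - (1 / 3) ^ a) := by
  classical
  have hsub : Aᶜ.powersetCard k ⊆
      (Finset.univ.powersetCard k).filter fun B => ¬ ∃ x ∈ B, x ∈ A := by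
    intro B hB
    rw [Finset.mem_powersetCard] at hB
    simp only [Finset.mem_filter, Finset.mem_powersetCard, Finset.subset_univ, true_and]
    refine ⟨hB.2, ?_⟩
    rintro ⟨x, hxB, hxA⟩
    exact Finset.mem_compl.mp (hB.1 hxB) hxA
  have hcard := Finset.card_le_card hsub
  have hsum := Finset.card_filter_add_card_filter_not
    (s := (Finset.univ : Finset (Fin (2 * k))).powersetCard k) (fun B => ∃ x ∈ B, x ∈ A)
  rw [Finset.card_powersetCard, Finset.card_compl, Fintype.card_fin] at hcard
  rw [Finset.card_powersetCard, Finset.card_univ, Fintype.card_fin] at hsum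
  have hmono : (2 * k - a).choose k ≤ (2 * k - A.card).choose k :=
    Nat.choose_le_choose k (by omega)
  have h3 : ((2 * k).choose k : ℝ) * (1 / 3) ^ a ≤ (2 * k - a).choose k := by
    have h := choose_two_mul_le_three_pow_mul k a ha
    have h' : ((2 * k).choose k : ℝ) ≤ 3 ^ a * (2 * k - a).choose k := by exact_mod_cast h
    rw [one_div, inv_pow, ← div_eq_mul_inv, div_le_iff₀ (by positivity)]
    linarith
  have h4 : ((2 * k - a).choose k : ℝ) ≤
      ((Finset.univ.powersetCard k).filter fun B => ¬ ∃ x ∈ B, x ∈ A).card := by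
    exact_mod_cast hmono.trans hcard
  have h5 : (((Finset.univ.powersetCard k).filter fun B => ∃ x ∈ B, x ∈ A).card : ℝ) +
      ((Finset.univ.powersetCard k).filter fun B => ¬ ∃ x ∈ B, x ∈ A).card =
      (2 * k).choose k := by exact_mod_cast hsum
  linarith

/-- For an assignment of `s` centres to each of `2k` colours, at least half of the vertices are
centres of few colours. -/
lemma card_le_two_mul_card_low (k n s t : ℕ) (ht : 4 * k * s ≤ n * (t + 1))
    (S : Fin (2 * k) → Fin s → Fin n) :
    n ≤ 2 * (Finset.univ.filter fun u : Fin n =>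
      (Finset.univ.filter fun x => ∃ i, S x i = u).card ≤ t).card := by
  classical
  set A : Fin n → Finset (Fin (2 * k)) := fun u => Finset.univ.filter fun x => ∃ i, S x i = u
  have hsum : ∑ u, (A u).card ≤ 2 * k * s := by
    have h1 : ∀ u, (A u).card = ∑ x, if ∃ i, S x i = u then 1 else 0 := fun u =>
      Finset.card_filter _ _
    simp_rw [h1]
    rw [Finset.sum_comm]
    have h2 : ∀ x, (∑ u, if ∃ i, S x i = u then 1 else 0) ≤ s := fun x => by
      rw [← Finset.card_filter]
      calc (Finset.univ.filter fun u => ∃ i, S x i = u).card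
          ≤ (Finset.univ.image (S x)).card := Finset.card_le_card (by
            intro u hu
            simpa using hu)
        _ ≤ s := by simpa using Finset.card_image_le (s := Finset.univ) (f := S x)
    calc _ ≤ ∑ x : Fin (2 * k), s := Finset.sum_le_sum fun x _ => h2 x
      _ = 2 * k * s := by simp
  have hhigh : (Finset.univ.filter fun u => ¬ (A u).card ≤ t).card * (t + 1) ≤ 2 * k * s := by
    refine le_trans ?_ hsum
    rw [← smul_eq_mul]
    refine (Finset.card_nsmul_le_sum _ (fun u => (A u).card) (t + 1) ?_).trans
      (Finset.sum_le_sum_of_subset (Finset.subset_univ _))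
    intro u hu
    have := (Finset.mem_filter.mp hu).2
    omega
  have hadd := Finset.card_filter_add_card_filter_not
    (s := (Finset.univ : Finset (Fin n))) (fun u => (A u).card ≤ t)
  rw [Finset.card_univ, Fintype.card_fin] at hadd
  have h2 : 2 * (Finset.univ.filter fun u => ¬ (A u).card ≤ t).card ≤ n := by
    refine Nat.le_of_mul_le_mul_right (c := t + 1) ?_ (Nat.succ_pos t)
    linarith
  change n ≤ 2 * (Finset.univ.filter fun u => (A u).card ≤ t).card
  omega

/-- There are lists such that no assignment of `s` centres to each colour lets every edge pick a
colour one of whose centres it contains. -/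
lemma exists_lists_not_covered (k n s t m : ℕ) (ht : 4 * k * s ≤ n * (t + 1)) (htk : 4 * t ≤ k)
    (hn : 4 ≤ n) (hm : 16 * m ≤ n ^ 2)
    (hlt : (n : ℝ) ^ (2 * k * s) * (1 - (1 / 9) ^ t) ^ m < 1) :
    ∃ L : Sym2 (Fin n) → Finset (Fin (2 * k)), (∀ e, (L e).card = k) ∧
      ∀ S : Fin (2 * k) → Fin s → Fin n,
        ∃ e : Sym2 (Fin n), ¬ e.IsDiag ∧ ∀ x ∈ L e, ∀ i, S x i ∉ e := by
  classical
  by_contra! hcon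
  set P : Finset (Finset (Fin (2 * k))) := Finset.univ.powersetCard k with hP
  have hPcard : P.card = (2 * k).choose k := by simp [hP]
  set Q : (Fin (2 * k) → Fin s → Fin n) → Sym2 (Fin n) → Finset (Finset (Fin (2 * k))) :=
    fun S e => P.filter fun B => ¬ e.IsDiag → ∃ x ∈ B, ∃ i, S x i ∈ e with hQ
  have hcover : Fintype.piFinset (fun _ : Sym2 (Fin n) => P) ⊆
      Finset.univ.biUnion fun S => Fintype.piFinset (Q S) := by
    intro L hL
    rw [Fintype.mem_piFinset] at hL
    obtain ⟨S, hS⟩ := hcon L fun e => (Finset.mem_powersetCard.mp (hL e)).2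
    rw [Finset.mem_biUnion]
    refine ⟨S, Finset.mem_univ _, Fintype.mem_piFinset.mpr fun e => ?_⟩
    exact Finset.mem_filter.mpr ⟨hL e, hS e⟩
  obtain ⟨T, hT⟩ : ∃ T : ℝ, T = (2 * k).choose k := ⟨_, rfl⟩
  have hTpos : 0 < T := by
    rw [hT]; exact_mod_cast Nat.choose_pos (by omega)
  set q : ℝ := 1 - (1 / 9) ^ t with hq
  have hq0 : 0 ≤ q := by
    have : ((1 : ℝ) / 9) ^ t ≤ 1 := pow_le_one₀ (by norm_num) (by norm_num)
    rw [hq]; linarith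
  have hq1 : q ≤ 1 := by
    have : (0 : ℝ) ≤ (1 / 9) ^ t := by positivity
    rw [hq]; linarith
  have hbound : ∀ S, ((Fintype.piFinset (Q S)).card : ℝ) ≤
      T ^ Fintype.card (Sym2 (Fin n)) * q ^ m := by
    intro S
    set A : Fin n → Finset (Fin (2 * k)) := fun u => Finset.univ.filter fun x => ∃ i, S x i = u
      with hA
    set W : Finset (Fin n) := Finset.univ.filter fun u => (A u).card ≤ t with hW
    have hWcard : n ≤ 2 * W.card := card_le_two_mul_card_low k n s t ht S
    set E : Finset (Sym2 (Fin n)) := W.offDiag.image Sym2.mk.uncurry with hE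
    have hEcard : m ≤ E.card := by
      have h1 : E.card = W.card.choose 2 := Sym2.card_image_offDiag W
      rw [h1, Nat.choose_two_right, Nat.le_div_iff_mul_le (by norm_num)]
      obtain ⟨w, hw⟩ : ∃ w, W.card = w + 1 := ⟨W.card - 1, by omega⟩
      rw [hw] at hWcard ⊢
      rw [Nat.add_sub_cancel]
      nlinarith
    have hle : ∀ e, ((Q S e).card : ℝ) ≤ T * (if e ∈ E then q else 1) := by
      intro e
      split_ifs with he
      · obtain ⟨⟨u, v⟩, huv, rfl⟩ := Finset.mem_image.mp he
        rw [Finset.mem_offDiag] at huv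
        obtain ⟨hu, hv, hne⟩ := huv
        have hu' : (A u).card ≤ t := (Finset.mem_filter.mp hu).2
        have hv' : (A v).card ≤ t := (Finset.mem_filter.mp hv).2
        have hAuv : (A u ∪ A v).card ≤ 2 * t :=
          (Finset.card_union_le _ _).trans (by omega)
        have h := card_powersetCard_filter_hit_le k (2 * t) (by omega) (A u ∪ A v) hAuv
        have hpow : ((1 : ℝ) / 3) ^ (2 * t) = (1 / 9) ^ t := by
          rw [pow_mul]; norm_num
        rw [hpow, ← hT] at h
        refine le_trans ?_ h
        refine Nat.cast_le.mpr (Finset.card_le_card ?_)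
        intro B hB
        obtain ⟨hBP, hB⟩ := Finset.mem_filter.mp hB
        refine Finset.mem_filter.mpr ⟨hBP, ?_⟩
        obtain ⟨x, hx, i, hi⟩ := hB (by simpa using hne)
        refine ⟨x, hx, ?_⟩
        rcases Sym2.mem_iff.mp hi with h | h
        · exact Finset.mem_union_left _ (by simpa [hA] using ⟨i, h⟩)
        · exact Finset.mem_union_right _ (by simpa [hA] using ⟨i, h⟩)
      · rw [mul_one, hT, ← hPcard]
        exact Nat.cast_le.mpr (Finset.card_filter_le _ _)
    calc ((Fintype.piFinset (Q S)).card : ℝ) = ∏ e, ((Q S e).card : ℝ) := by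
          rw [Fintype.card_piFinset]; push_cast; rfl
      _ ≤ ∏ e, (T * (if e ∈ E then q else 1)) :=
          Finset.prod_le_prod (fun _ _ => by positivity) fun e _ => hle e
      _ = T ^ Fintype.card (Sym2 (Fin n)) * q ^ E.card := by
          rw [Finset.prod_mul_distrib, Finset.prod_const, Finset.card_univ,
            Finset.prod_ite_mem, Finset.univ_inter, Finset.prod_const]
      _ ≤ _ := by
          gcongr _ * ?_
          exact pow_le_pow_of_le_one hq0 hq1 hEcard
  have hfinal : T ^ Fintype.card (Sym2 (Fin n)) ≤
      (n : ℝ) ^ (2 * k * s) * (T ^ Fintype.card (Sym2 (Fin n)) * q ^ m) := by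
    have h1 := (Finset.card_le_card hcover).trans Finset.card_biUnion_le
    rw [Fintype.card_piFinset, Finset.prod_const, Finset.card_univ, hPcard] at h1
    have h2 : T ^ Fintype.card (Sym2 (Fin n)) ≤
        ∑ S, ((Fintype.piFinset (Q S)).card : ℝ) := by
      rw [hT]; exact_mod_cast h1
    refine h2.trans ((Finset.sum_le_sum fun S _ => hbound S).trans_eq ?_)
    rw [Finset.sum_const, nsmul_eq_mul, Finset.card_univ]
    congr 1
    simp only [Fintype.card_fun, Fintype.card_fin]
    push_cast
    rw [← pow_mul, mul_comm s]
  have hTN : 0 < T ^ Fintype.card (Sym2 (Fin n)) := by positivity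
  nlinarith [mul_lt_mul_of_pos_left hlt hTN]

/-- Lists that no assignment of `2r` centres per colour can serve force a monochromatic `rK₂`. -/
lemma exists_lists_hasMonoCopy (r k n : ℕ) (hn : 0 < n)
    (h : ∃ L : Sym2 (Fin n) → Finset (Fin (2 * k)), (∀ e, (L e).card = k) ∧
      ∀ S : Fin (2 * k) → Fin (2 * r) → Fin n,
        ∃ e : Sym2 (Fin n), ¬ e.IsDiag ∧ ∀ x ∈ L e, ∀ i, S x i ∉ e) :
    ∃ L : Sym2 (Fin n) → Finset ℕ, (∀ e : Sym2 (Fin n), ¬ e.IsDiag → (L e).card = k) ∧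
      ∀ c : Sym2 (Fin n) → ℕ, (∀ e : Sym2 (Fin n), ¬ e.IsDiag → c e ∈ L e) →
        HasMonoCopy (matchingGraph r) c := by
  classical
  have : Nonempty (Fin n) := ⟨⟨0, hn⟩⟩
  obtain ⟨L, hL, hS⟩ := h
  refine ⟨fun e => (L e).map Fin.valEmbedding, fun e _ => by simp [hL], fun c hc => ?_⟩
  by_contra hmono
  have hcover : ∀ x : Fin (2 * k), ∃ g : ℕ → Fin n, ∀ u v, u ≠ v → c s(u, v) = x →
      ∃ i < 2 * r, g i = u ∨ g i = v := by
    intro x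
    rcases exists_matching_or_cover (fun u v : Fin n => u ≠ v ∧ c s(u, v) = x)
      (fun u h => h.1 rfl) r with ⟨f, hinj, hf⟩ | ⟨g, hg⟩
    · refine absurd ⟨fun i => f i, x, fun i j hij => Fin.ext (hinj i i.2 j j.2 hij), ?_⟩ hmono
      have key : ∀ a b : Fin (2 * r), (b : ℕ) = a + 1 ∧ (a : ℕ) % 2 = 0 →
          c s(f a, f b) = x := by
        rintro a b ⟨hb, ha⟩
        have h2 : 2 * ((a : ℕ) / 2) = a := by omega
        have := (hf ((a : ℕ) / 2) (by omega)).2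
        rwa [h2, ← hb] at this
      intro a b hab
      rw [matchingGraph, SimpleGraph.fromRel_adj] at hab
      rcases hab.2 with h | h
      · exact key a b h
      · rw [Sym2.eq_swap]; exact key b a h
    · exact ⟨g, fun u v hne h => hg u v ⟨hne, h⟩⟩
  choose g hg using hcover
  obtain ⟨e, hdiag, he⟩ := hS fun x i => g x i
  obtain ⟨x, hx, hxe⟩ := Finset.mem_map.mp (hc e hdiag)
  induction e using Sym2.inductionOn with
  | _ u v =>
    obtain ⟨i, hi, h⟩ := hg x u v (by simpa using hdiag) hxe.symm
    exact he x hx ⟨i, hi⟩ (Sym2.mem_iff.mpr (h.imp id id))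

/-- If there are few vertices, the colours can be assigned centres so that every edge has a colour
in its list centred at one of its endpoints. -/
lemma exists_centres (k n : ℕ) (hlt : (n : ℝ) ^ 2 * (1 - 2 / n) ^ k < 1) (hn : 2 ≤ n)
    (L : Sym2 (Fin n) → Finset ℕ) (hL : ∀ e : Sym2 (Fin n), ¬ e.IsDiag → (L e).card = k) :
    ∃ g : ℕ → Fin n, ∀ e : Sym2 (Fin n), ¬ e.IsDiag → ∃ x ∈ L e, g x ∈ e := by
  classical
  set U : Finset ℕ := Finset.univ.biUnion L with hU
  have hLU : ∀ e, L e ⊆ U := fun e => Finset.subset_biUnion_of_mem L (Finset.mem_univ e)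
  by_contra! hcon
  set D : Finset (Fin n × Fin n) := Finset.univ.offDiag with hD
  set Q : Fin n × Fin n → U → Finset (Fin n) :=
    fun p x => if (x : ℕ) ∈ L s(p.1, p.2) then {p.1, p.2}ᶜ else Finset.univ with hQ
  have hcover : (Finset.univ : Finset (U → Fin n)) ⊆
      D.biUnion fun p => Fintype.piFinset (Q p) := by
    intro g _
    obtain ⟨e, hdiag, he⟩ := hcon fun x => if h : x ∈ U then g ⟨x, h⟩ else ⟨0, by omega⟩
    induction e using Sym2.inductionOn with
    | _ u v =>
      rw [Finset.mem_biUnion]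
      refine ⟨(u, v), by simpa [hD] using hdiag, Fintype.mem_piFinset.mpr fun x => ?_⟩
      by_cases hx : (x : ℕ) ∈ L s(u, v)
      · have := he x hx
        simpa [hQ, hx] using this
      · simp [hQ, hx]
  have hbound : ∀ p ∈ D, ((Fintype.piFinset (Q p)).card : ℝ) =
      (n : ℝ) ^ U.card * (1 - 2 / n) ^ k := by
    intro p hp
    have hne : p.1 ≠ p.2 := (Finset.mem_offDiag.mp hp).2.2
    have hcard : ∀ x : U, ((Q p x).card : ℝ) =
        n * (if (x : ℕ) ∈ L s(p.1, p.2) then (1 - 2 / n : ℝ) else 1) := by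
      intro x
      have hn0 : (n : ℝ) ≠ 0 := by positivity
      by_cases hx : (x : ℕ) ∈ L s(p.1, p.2)
      · simp only [hQ, hx, if_true]
        rw [Finset.card_compl, Finset.card_pair hne, Fintype.card_fin, Nat.cast_sub hn]
        field_simp
        norm_num
      · simp [hQ, hx]
    rw [Fintype.card_piFinset]
    push_cast
    simp_rw [hcard]
    rw [Finset.prod_mul_distrib, Finset.prod_const, Finset.card_univ, Fintype.card_coe,
      Finset.prod_coe_sort U (fun x => if x ∈ L s(p.1, p.2) then (1 - 2 / n : ℝ) else 1),
      Finset.prod_ite_mem, Finset.inter_eq_right.mpr (hLU _), Finset.prod_const,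
      hL _ (by simpa using hne)]
  have h1 := (Finset.card_le_card hcover).trans Finset.card_biUnion_le
  rw [Finset.card_univ, Fintype.card_fun, Fintype.card_fin, Fintype.card_coe] at h1
  have h2 : (n : ℝ) ^ U.card ≤ ∑ p ∈ D, ((Fintype.piFinset (Q p)).card : ℝ) := by
    exact_mod_cast h1
  rw [Finset.sum_congr rfl hbound, Finset.sum_const, nsmul_eq_mul] at h2
  have hDcard : (D.card : ℝ) ≤ (n : ℝ) ^ 2 := by
    have : D.card ≤ n ^ 2 := by
      rw [hD, Finset.offDiag_card, Finset.card_univ, Fintype.card_fin, sq]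
      omega
    exact_mod_cast this
  have hpos : (0 : ℝ) < (n : ℝ) ^ U.card := by positivity
  have hq : (0 : ℝ) ≤ (1 - 2 / n) ^ k := by
    have : (2 : ℝ) / n ≤ 1 := by
      rw [div_le_one (by positivity)]
      exact_mod_cast hn
    exact pow_nonneg (by linarith) _
  have h3 : (n : ℝ) ^ U.card ≤ (n : ℝ) ^ U.card * ((n : ℝ) ^ 2 * (1 - 2 / n) ^ k) := by
    refine h2.trans ?_
    calc (D.card : ℝ) * ((n : ℝ) ^ U.card * (1 - 2 / n) ^ k)
        ≤ (n : ℝ) ^ 2 * ((n : ℝ) ^ U.card * (1 - 2 / n) ^ k) := by gcongr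
      _ = _ := by ring
  nlinarith [mul_lt_mul_of_pos_left hlt hpos]

/-- If every colouring from the lists contains a monochromatic `rK₂` with `r ≥ 2`, then there are
so many vertices that the first moment bound for random centres is trivial. -/
lemma one_le_of_forces_matching (r k n : ℕ) (hr : 2 ≤ r) (L : Sym2 (Fin n) → Finset ℕ)
    (hL : ∀ e : Sym2 (Fin n), ¬ e.IsDiag → (L e).card = k)
    (hmono : ∀ c : Sym2 (Fin n) → ℕ, (∀ e : Sym2 (Fin n), ¬ e.IsDiag → c e ∈ L e) →
      HasMonoCopy (matchingGraph r) c) :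
    2 ≤ n ∧ 1 ≤ (n : ℝ) ^ 2 * (1 - 2 / n) ^ k := by
  classical
  have hn : 2 ≤ n := by
    by_contra hlt
    have hdiag : ∀ e : Sym2 (Fin n), e.IsDiag := by
      intro e
      induction e using Sym2.inductionOn with
      | _ u v => exact Sym2.mk_isDiag_iff.mpr (Fin.ext (by omega))
    obtain ⟨f, -, hf, -⟩ := hmono (fun _ => 0) fun e he => absurd (hdiag e) he
    have := Fintype.card_le_of_injective f hf
    simp only [Fintype.card_fin] at this
    omega
  refine ⟨hn, ?_⟩
  by_contra! hlt
  obtain ⟨g, hg⟩ := exists_centres k n hlt hn L hL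
  obtain ⟨f, x, hf, hfx⟩ := hmono
    (fun e => if h : ∃ x ∈ L e, g x ∈ e then h.choose else 0) (fun e he => by
      simp only [hg e he, dif_pos]
      exact (hg e he).choose_spec.1)
  have key : ∀ a b, (matchingGraph r).Adj a b → g x ∈ s(f a, f b) := by
    intro a b hab
    have hne : ¬ s(f a, f b).IsDiag := by simpa using fun h => hab.ne (hf h)
    have h := hfx a b hab
    simp only [hg _ hne, dif_pos] at h
    rw [← h]
    exact (hg _ hne).choose_spec.2
  have h01 := key ⟨0, by omega⟩ ⟨1, by omega⟩ (by simp [matchingGraph])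
  have h23 := key ⟨2, by omega⟩ ⟨3, by omega⟩ (by simp [matchingGraph])
  rw [Sym2.mem_iff] at h01 h23
  have hne : ∀ i j : Fin (2 * r), (i : ℕ) ≠ j → f i ≠ f j := fun i j hij h =>
    hij (congrArg Fin.val (hf h))
  rcases h01 with h | h <;> rcases h23 with h' | h' <;>
    exact hne _ _ (by simp) (h.symm.trans h')

lemma div_log_le_of_one_le (k n : ℕ) (hlog : 1 ≤ Real.log k) (hn : 2 ≤ n)
    (h : 1 ≤ (n : ℝ) ^ 2 * (1 - 2 / n) ^ k) : 1 / 2 * k / Real.log k ≤ (n : ℝ) := by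
  by_contra! hlt
  have hn0 : (0 : ℝ) < n := by positivity
  have hn2 : (2 : ℝ) ≤ n := by exact_mod_cast hn
  have hk : (0 : ℝ) < k := by
    rcases Nat.eq_zero_or_pos k with rfl | hk
    · simp at hlog; linarith
    · exact_mod_cast hk
  rw [lt_div_iff₀ (by linarith)] at hlt
  have hnk : (n : ℝ) ≤ k := by nlinarith
  have h1 : (1 - 2 / n : ℝ) ^ k ≤ Real.exp (-(4 * Real.log k)) := by
    have h0 : (0 : ℝ) ≤ 1 - 2 / n := by
      rw [sub_nonneg, div_le_one hn0]; exact hn2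
    calc (1 - 2 / n : ℝ) ^ k ≤ Real.exp (-(2 / n)) ^ k :=
          pow_le_pow_left₀ h0 (Real.one_sub_le_exp_neg _) k
      _ = Real.exp (-(2 * k / n)) := by rw [← Real.exp_nat_mul]; congr 1; ring
      _ ≤ _ := by
          rw [Real.exp_le_exp, neg_le_neg_iff, le_div_iff₀ hn0]
          linarith
  have h2 : (n : ℝ) ^ 2 < Real.exp (4 * Real.log k) := by
    have : Real.exp (4 * Real.log k) = (k : ℝ) ^ 4 := by
      rw [show (4 : ℝ) = (4 : ℕ) by norm_num, Real.exp_nat_mul, Real.exp_log hk]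
    rw [this]
    have hk2 : (2 : ℝ) ≤ k := hn2.trans hnk
    have hk4 : (4 : ℝ) ≤ (k : ℝ) ^ 2 := by nlinarith
    have : (n : ℝ) ^ 2 ≤ (k : ℝ) ^ 2 := by gcongr
    nlinarith
  have h3 : (n : ℝ) ^ 2 * (1 - 2 / n) ^ k < 1 := by
    calc (n : ℝ) ^ 2 * (1 - 2 / n) ^ k ≤ (n : ℝ) ^ 2 * Real.exp (-(4 * Real.log k)) := by gcongr
      _ < Real.exp (4 * Real.log k) * Real.exp (-(4 * Real.log k)) := by gcongr
      _ = 1 := by rw [← Real.exp_add]; simp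
  linarith

lemma pow_mul_one_sub_pow_lt_one (k n s t : ℕ) (hs : 0 < s) (hlog : 1 ≤ Real.log k)
    (hn : 8 ≤ n) (hnk : n ≤ k ^ 2) (hnlog : (k : ℝ) / Real.log k ≤ n)
    (ht : (t : ℝ) ≤ Real.log k / 6) (hbig : (128 * s * Real.log k ^ 3) ^ 2 < (k : ℝ)) :
    (n : ℝ) ^ (2 * k * s) * (1 - (1 / 9) ^ t) ^ (n ^ 2 / 16) < 1 := by
  have hk : (0 : ℝ) < k := lt_of_le_of_lt (by positivity) hbig
  have hn0 : (0 : ℝ) < n := by positivity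
  obtain ⟨l, hl⟩ : ∃ l, l = Real.log k := ⟨_, rfl⟩
  rw [← hl] at hlog hnlog ht hbig
  have hl0 : 0 < l := by linarith
  have hlogn : Real.log n ≤ 2 * l := by
    have h : Real.log n ≤ Real.log ((k : ℝ) ^ 2) :=
      Real.log_le_log hn0 (by exact_mod_cast hnk)
    rw [Real.log_pow] at h
    rw [hl]; exact_mod_cast h
  have hp : (Real.sqrt k)⁻¹ ≤ (1 / 9 : ℝ) ^ t := by
    have h9 : Real.exp (-3) ≤ 1 / 9 := by
      rw [Real.exp_neg, one_div]
      refine inv_anti₀ (by norm_num) ?_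
      rw [show (3 : ℝ) = (3 : ℕ) * 1 by norm_num, Real.exp_nat_mul]
      have := Real.exp_one_gt_d9
      have h3 : (2.7 : ℝ) ^ 3 ≤ Real.exp 1 ^ 3 := by gcongr; linarith
      norm_num at h3 ⊢
      linarith
    calc (Real.sqrt k)⁻¹ = Real.exp (-(l / 2)) := by
          rw [Real.exp_neg, Real.sqrt_eq_rpow, Real.rpow_def_of_pos hk, ← hl]
          congr 2; ring
      _ ≤ Real.exp (t * (-3)) := by rw [Real.exp_le_exp]; linarith
      _ = Real.exp (-3) ^ t := Real.exp_nat_mul _ _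
      _ ≤ _ := by gcongr
  have hsq : 128 * s * l ^ 3 < Real.sqrt k := by
    rw [Real.lt_sqrt (by positivity)]; exact hbig
  have hm : (n : ℝ) ^ 2 / 32 ≤ ((n ^ 2 / 16 : ℕ) : ℝ) := by
    have h1 : n ^ 2 < 16 * (n ^ 2 / 16 + 1) := by omega
    have h2 : (n : ℝ) ^ 2 < 16 * ((n ^ 2 / 16 : ℕ) + 1) := by exact_mod_cast h1
    have h3 : (8 : ℝ) ≤ n := by exact_mod_cast hn
    nlinarith
  have hq0 : (0 : ℝ) ≤ 1 - (1 / 9) ^ t := by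
    have : ((1 : ℝ) / 9) ^ t ≤ 1 := pow_le_one₀ (by norm_num) (by norm_num)
    linarith
  have hkey : 2 * k * s * Real.log n < (1 / 9 : ℝ) ^ t * (n ^ 2 / 16 : ℕ) := by
    have hsqrt : 0 < Real.sqrt k := Real.sqrt_pos.mpr hk
    calc 2 * k * s * Real.log n ≤ 2 * k * s * (2 * l) := by gcongr
      _ < (Real.sqrt k)⁻¹ * ((k / l) ^ 2 / 32) := by
          have h : (Real.sqrt k)⁻¹ * ((k / l) ^ 2 / 32) = Real.sqrt k * k / (32 * l ^ 2) := by
            rw [inv_mul_eq_div, div_eq_div_iff hsqrt.ne' (by positivity)]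
            field_simp
            rw [Real.sq_sqrt hk.le]
          rw [h, lt_div_iff₀ (by positivity)]
          have := mul_lt_mul_of_pos_right hsq hk
          nlinarith
      _ ≤ (1 / 9 : ℝ) ^ t * ((n : ℝ) ^ 2 / 32) := by gcongr
      _ ≤ _ := by gcongr
  calc (n : ℝ) ^ (2 * k * s) * (1 - (1 / 9) ^ t) ^ (n ^ 2 / 16)
      ≤ Real.exp (2 * k * s * Real.log n) * Real.exp (-((1 / 9 : ℝ) ^ t * (n ^ 2 / 16 : ℕ))) := by
        refine mul_le_mul (le_of_eq ?_) ?_ (pow_nonneg hq0 _) (Real.exp_pos _).le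
        · rw [← Real.rpow_natCast, Real.rpow_def_of_pos hn0]
          push_cast
          congr 1; ring
        · refine (pow_le_pow_left₀ hq0 (Real.one_sub_le_exp_neg _) _).trans_eq ?_
          rw [← Real.exp_nat_mul]
          congr 1; ring
    _ < 1 := by
        rw [← Real.exp_add, Real.exp_lt_one_iff]
        linarith

lemma exists_lists_of_large (r k : ℕ) (hr : 2 ≤ r) (hlog : 1 ≤ Real.log k)
    (hkr : 48 * r + 1 ≤ k) (hbig : (128 * (2 * r : ℕ) * Real.log k ^ 3) ^ 2 < (k : ℝ)) :
    ∃ n : ℕ, (n : ℝ) ≤ (48 * r + 1) * k / Real.log k ∧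
      ∃ L : Sym2 (Fin n) → Finset ℕ, (∀ e : Sym2 (Fin n), ¬ e.IsDiag → (L e).card = k) ∧
        ∀ c : Sym2 (Fin n) → ℕ, (∀ e : Sym2 (Fin n), ¬ e.IsDiag → c e ∈ L e) →
          HasMonoCopy (matchingGraph r) c := by
  have hk : (0 : ℝ) < k := lt_of_le_of_lt (by positivity) hbig
  have hl0 : 0 < Real.log k := by linarith
  have hlk : Real.log k ≤ k := Real.log_le_self hk.le
  have hr' : (2 : ℝ) ≤ r := by exact_mod_cast hr
  have hx : 1 ≤ k / Real.log k := by rwa [le_div_iff₀ hl0, one_mul]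
  have hxk : k / Real.log k ≤ k := div_le_self hk.le hlog
  obtain ⟨n, hn⟩ : ∃ n : ℕ, n = ⌈48 * r * (k / Real.log k)⌉₊ := ⟨_, rfl⟩
  have hlow : 48 * r * (k / Real.log k) ≤ n := hn ▸ Nat.le_ceil _
  have hupp : (n : ℝ) ≤ (48 * r + 1) * (k / Real.log k) := by
    have := (Nat.ceil_lt_add_one (show 0 ≤ 48 * r * (k / Real.log k) by positivity)).le
    rw [← hn] at this
    linarith
  have hn8 : 8 ≤ n := by
    have : (8 : ℝ) ≤ n := by nlinarith
    exact_mod_cast this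
  have hnk : n ≤ k ^ 2 := by
    have h1 : (48 * r + 1 : ℝ) ≤ k := by exact_mod_cast hkr
    have : (n : ℝ) ≤ (k : ℝ) ^ 2 := by
      rw [sq]
      exact hupp.trans (by gcongr)
    exact_mod_cast this
  obtain ⟨t, ht⟩ : ∃ t : ℕ, t = 4 * k * (2 * r) / n := ⟨_, rfl⟩
  have ht1 : 4 * k * (2 * r) ≤ n * (t + 1) := ht ▸ (Nat.lt_mul_div_succ _ (by omega)).le
  have ht2 : (t : ℝ) ≤ Real.log k / 6 := by
    have h1 : (t : ℝ) * n ≤ 4 * k * (2 * r) := by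
      have : t * n ≤ 4 * k * (2 * r) := ht ▸ Nat.div_mul_le_self _ _
      exact_mod_cast this
    have h2 : 48 * r * k ≤ n * Real.log k := by
      rw [← mul_div_assoc, div_le_iff₀ hl0] at hlow
      exact hlow
    have hn0 : (0 : ℝ) < n := by positivity
    refine le_of_mul_le_mul_right ?_ hn0
    linarith
  have htk : 4 * t ≤ k := by
    have : (4 * t : ℝ) ≤ k := by linarith
    exact_mod_cast this
  refine ⟨n, by rwa [mul_div_assoc], exists_lists_hasMonoCopy r k n (by omega) ?_⟩
  refine exists_lists_not_covered k n (2 * r) t (n ^ 2 / 16) ht1 htk (by omega)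
    (Nat.mul_div_le _ _) ?_
  exact pow_mul_one_sub_pow_lt_one k n (2 * r) t (by omega) hlog hn8 hnk
    (le_trans (by nlinarith) hlow) ht2 hbig

theorem list_ramsey_matching_asymp_k (r : ℕ) (hr : 2 ≤ r) :
    ∃ C₁ C₂ : ℝ, 0 < C₁ ∧ 0 < C₂ ∧ ∃ k₀ : ℕ, ∀ k : ℕ, k₀ ≤ k →
      C₁ * k / Real.log k ≤ (listRamsey (matchingGraph r) k : ℝ) ∧
      (listRamsey (matchingGraph r) k : ℝ) ≤ C₂ * k / Real.log k := by
  have hev : ∀ᶠ k : ℕ in Filter.atTop, 1 ≤ Real.log k ∧ 48 * r + 1 ≤ k ∧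
      (128 * (2 * r : ℕ) * Real.log k ^ 3) ^ 2 < (k : ℝ) := by
    have hlog : ∀ᶠ k : ℕ in Filter.atTop, 1 ≤ Real.log k :=
      (Real.tendsto_log_atTop.comp tendsto_natCast_atTop_atTop).eventually_ge_atTop 1
    have hO := (Real.isLittleO_pow_log_id_atTop (n := 6)).def
      (show (0 : ℝ) < 1 / (2 * (128 * (2 * r : ℕ)) ^ 2) by positivity)
    have hbig := tendsto_natCast_atTop_atTop.eventually hO
    filter_upwards [hlog, hbig, Filter.eventually_ge_atTop (48 * r + 1)] with k h1 h2 h3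
    refine ⟨h1, h3, ?_⟩
    have hk : (0 : ℝ) < k := by
      have : 0 < k := by omega
      exact_mod_cast this
    rw [Real.norm_of_nonneg (by positivity), id, Real.norm_of_nonneg hk.le, one_div,
      inv_mul_eq_div, le_div_iff₀ (by positivity)] at h2
    nlinarith
  obtain ⟨k₀, hk₀⟩ := Filter.eventually_atTop.mp hev
  refine ⟨1 / 2, 48 * r + 1, by norm_num, by positivity, k₀, fun k hk => ?_⟩
  obtain ⟨hlog, hkr, hbig⟩ := hk₀ k hk
  obtain ⟨n, hn, hL⟩ := exists_lists_of_large r k hr hlog hkr hbig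
  constructor
  · obtain ⟨L, hcard, hmono⟩ := Nat.sInf_mem (s := { n : ℕ | ∃ L : Sym2 (Fin n) → Finset ℕ,
      (∀ e : Sym2 (Fin n), ¬ e.IsDiag → (L e).card = k) ∧
      ∀ c : Sym2 (Fin n) → ℕ, (∀ e : Sym2 (Fin n), ¬ e.IsDiag → c e ∈ L e) →
        HasMonoCopy (matchingGraph r) c }) ⟨n, hL⟩
    obtain ⟨h2, h1⟩ := one_le_of_forces_matching r k _ hr L hcard hmono
    exact div_log_le_of_one_le k _ hlog h2 h1
  · exact le_trans (Nat.cast_le.mpr (Nat.sInf_le hL)) hn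
end
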